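/- arXiv:1406.3731 — 3 statements merged into one kernel-verified Lean document; each statement's English description precedes it below -/
import Mathlib

section
/- Let G be a finitely generated abelian group and ω a set of primes. Let A be a ℤG-module whose underlying abelian group has finite rank, and let B be a ℤG-module whose underlying additive group is a Černikov ω-group. If A has no infinite ℤG-module quotient that is isomorphic as a ℤG-module to a quotient of B, then Ext^n_{ℤG}(A,B) is a Černikov ω-group for all n ≥ 0. -/
/-!
Statement 2: Proposition A of "Torsion cohomology for solvable groups of finite
rank".  Here `Ext^n_{ℤG}(A, B)` is interpreted as the `Ext` group in the abelian
category `Rep ℤ G` of `ℤG`-modules.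
-/

open CategoryTheory

noncomputable section




/-- The rational circle `ℚ/ℤ`. -/
abbrev RatCircle : Type := ℚ ⧸ AddSubgroup.zmultiples (1 : ℚ)

/-- The quasicyclic (Prüfer) `p`-group, realized as the `p`-primary part of `ℚ/ℤ`. -/
def pruferSubgroup (p : ℕ) : AddSubgroup RatCircle where
  carrier := {x | ∃ n : ℕ, (p ^ n : ℕ) • x = 0}
  zero_mem' := ⟨0, smul_zero _⟩
  add_mem' := by
    rintro a b ⟨m, hm⟩ ⟨n, hn⟩
    refine ⟨m + n, ?_⟩
    have ha : (p ^ m * p ^ n) • a = 0 := by rw [mul_comm, mul_smul, hm, smul_zero]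
    have hb : (p ^ m * p ^ n) • b = 0 := by rw [mul_smul, hn, smul_zero]
    rw [smul_add, pow_add, ha, hb, add_zero]
  neg_mem' := by
    rintro a ⟨m, hm⟩
    exact ⟨m, by rw [smul_neg, hm, neg_zero]⟩

/-- A group has a quasicyclic `p`-section if some quotient of a subgroup is
isomorphic to the Prüfer `p`-group. -/
def HasQuasicyclicSection (G : Type*) [Group G] (p : ℕ) : Prop :=
  ∃ (H : Subgroup G) (K : Subgroup H) (_ : K.Normal),
    Nonempty ((H ⧸ K) ≃* Multiplicative (pruferSubgroup p))

/-- The spectrum of a group: the set of primes `p` such that the group has a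
section isomorphic to the quasicyclic `p`-group. -/
def groupSpectrum (G : Type*) [Group G] : Set ℕ :=
  {p | p.Prime ∧ HasQuasicyclicSection G p}

/-- The spectrum of an (additive) abelian group, via `Multiplicative`. -/
abbrev addSpectrum (A : Type*) [AddGroup A] : Set ℕ :=
  groupSpectrum (Multiplicative A)

/-- An abelian group has finite rank if its torsion-free rank and all of its
`p`-ranks are finite. -/
def FiniteRankAbelian (A : Type*) [AddCommGroup A] : Prop :=
  (∃ n : ℕ, ∀ k : ℕ, (∃ f : (Fin k →₀ ℤ) →+ A, Function.Injective f) → k ≤ n) ∧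
  ∀ p : ℕ, p.Prime → {a : A | (p : ℕ) • a = 0}.Finite

/-- A group has finite rank (in the sense appropriate for abelian groups:
finite torsion-free rank and finite `p`-ranks). -/
def FiniteRankGroup (G : Type*) [Group G] : Prop :=
  (∃ n : ℕ, ∀ k : ℕ,
    (∃ f : Multiplicative (Fin k →₀ ℤ) →* G, Function.Injective f) → k ≤ n) ∧
  ∀ p : ℕ, p.Prime → {g : G | g ^ p = 1}.Finite

/-- A solvable group of finite rank: a solvable group all of whose abelian
sections have finite rank. -/
def SolvableOfFiniteRank (G : Type*) [Group G] : Prop :=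
  IsSolvable G ∧
    ∀ (H : Subgroup G) (K : Subgroup H) (_ : K.Normal),
      (∀ x y : H ⧸ K, x * y = y * x) → FiniteRankGroup (H ⧸ K)

/-- A group is virtually abelian. -/
def VirtuallyAbelian (G : Type*) [Group G] : Prop :=
  ∃ H : Subgroup G, H.index ≠ 0 ∧ ∀ x y : H, x * y = y * x

/-- A Černikov abelian group: it has a subgroup of finite index that is a direct
sum of finitely many quasicyclic groups. -/
def IsCernikov (A : Type*) [AddCommGroup A] : Prop :=
  ∃ (S : AddSubgroup A) (r : ℕ) (p : Fin r → ℕ),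
    S.index ≠ 0 ∧ (∀ i, (p i).Prime) ∧
    Nonempty (S ≃+ ((i : Fin r) → pruferSubgroup (p i)))

/-- A torsion `ω`-group: every element has finite order divisible only by primes
in `ω`. -/
def IsOmegaTorsion (ω : Set ℕ) (A : Type*) [AddGroup A] : Prop :=
  ∀ a : A, IsOfFinAddOrder a ∧
    ∀ p : ℕ, p.Prime → (p : ℤ) ∣ (addOrderOf a : ℤ) → p ∈ ω

/-- A Černikov `ω`-group. -/
def IsCernikovOmega (ω : Set ℕ) (A : Type*) [AddCommGroup A] : Prop :=
  IsCernikov A ∧ IsOmegaTorsion ω A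

/-!
A Černikov `ω`-group is the same thing as an Artinian group all of whose elements are killed by
powers of one number `N` with prime factors in `ω`, and this class is closed under subgroups,
quotients and extensions. Replace `ℤG` by a commutative Noetherian ring `R`. The module `A` has a
finitely generated submodule `A₀`, contained in a submodule `A₁` such that `A₁/A₀` is torsion prime
to `N` and `A/A₁` is an Artinian `N`-power-torsion group. The group `Ext(A₀, B)` is handled by
finite free resolutions, and `Ext(A₁/A₀, B)` vanishes because, by Artin–Rees, `N`-power-torsion
modules have injective resolutions by modules of the same kind.

There remains `Ext(D, E)` for `D` and `E` Artinian, `N`-power-torsion and `N`-divisible. The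
`N`-adic completion `Λ` of `R` acts on both, and their modules of division towers of `0` are
finitely generated over `Λ`. If no power of `N` lies in `ann_Λ D + ann_Λ E`, a maximal ideal of
`Λ[1/N]` containing both annihilators provides an infinite common quotient of `D` and `E`.
Otherwise some element of `Λ` kills `D` and acts on `E` as `N ^ m`; as the action of `Λ` is
natural, `N ^ m` kills `Ext(D, E)`, which therefore embeds into `Ext(D[N ^ m], E)` with `D[N ^ m]`
finite.
-/

/-! ### Power-torsion groups and Artinian groups -/

/-- Every element of `M` is killed by a power of `N`, that is, `M` is an `N`-power-torsion group.
This holds for every `M` if `N = 0`. -/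
def IsPowTorsion (N : ℕ) (M : Type*) [AddCommGroup M] : Prop :=
  ∀ x : M, ∃ k : ℕ, N ^ k • x = 0

namespace IsPowTorsion

variable {N : ℕ} {E F G : Type*} [AddCommGroup E] [AddCommGroup F] [AddCommGroup G]

theorem of_injective (f : E →+ F) (hf : Function.Injective f) (h : IsPowTorsion N F) :
    IsPowTorsion N E := fun x => by
  obtain ⟨k, hk⟩ := h (f x)
  exact ⟨k, hf (by rw [map_nsmul, hk, map_zero])⟩

theorem of_surjective (f : E →+ F) (hf : Function.Surjective f) (h : IsPowTorsion N E) :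
    IsPowTorsion N F := fun x => by
  obtain ⟨x, rfl⟩ := hf x
  obtain ⟨k, hk⟩ := h x
  exact ⟨k, by rw [← map_nsmul, hk, map_zero]⟩

theorem of_exact {f : E →+ F} {g : F →+ G} (hfg : Function.Exact f g) (hE : IsPowTorsion N E)
    (hG : IsPowTorsion N G) : IsPowTorsion N F := fun x => by
  obtain ⟨k, hk⟩ := hG (g x)
  rw [← map_nsmul] at hk
  obtain ⟨y, hy⟩ := (hfg _).1 hk
  obtain ⟨l, hl⟩ := hE y
  exact ⟨l + k, by rw [pow_add, mul_smul, ← hy, ← map_nsmul, hl, map_zero]⟩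

theorem exists_forall_pow_smul_eq_zero (h : IsPowTorsion N E) {ι : Type*} [Finite ι] (x : ι → E) :
    ∃ k : ℕ, ∀ i, N ^ k • x i = 0 := by
  cases nonempty_fintype ι
  choose k hk using fun i => h (x i)
  refine ⟨∑ i, k i, fun i => ?_⟩
  obtain ⟨d, hd⟩ : N ^ k i ∣ N ^ ∑ i, k i :=
    pow_dvd_pow N (Finset.single_le_sum (fun _ _ => Nat.zero_le _) (Finset.mem_univ i))
  rw [hd, mul_comm, mul_smul, hk, smul_zero]

theorem exists_pow_smul_mem_socle (h : IsPowTorsion N E) {x : E} (hx : x ≠ 0) :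
    ∃ k : ℕ, N ^ k • x ≠ 0 ∧ N • N ^ k • x = 0 := by
  classical
  have hpos : Nat.find (h x) ≠ 0 := fun h0 => hx (by simpa [h0] using Nat.find_spec (h x))
  obtain ⟨k, hk⟩ := Nat.exists_eq_succ_of_ne_zero hpos
  refine ⟨k, Nat.find_min (h x) (by omega), ?_⟩
  rw [← mul_smul, ← pow_succ', ← Nat.succ_eq_add_one, ← hk]
  exact Nat.find_spec (h x)

theorem injective_of_torsion (h : IsPowTorsion N E) (f : E →+ F)
    (hf : ∀ x, N • x = 0 → f x = 0 → x = 0) : Function.Injective f := by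
  refine (injective_iff_map_eq_zero f).2 fun x hx => by_contra fun hx0 => ?_
  obtain ⟨k, hk, hNk⟩ := h.exists_pow_smul_mem_socle hx0
  exact hk (hf _ hNk (by rw [map_nsmul, hx, smul_zero]))

end IsPowTorsion

section Artinian

variable {M : Type*} [AddCommGroup M] {N : ℕ}

/-- The `N`-height of `t` in `H`, shifted by one: it exceeds `k` iff `t ∈ N ^ k • H`. -/
def powHeight (N : ℕ) (H : Submodule ℤ M) (t : M) : ℕ∞ :=
  ⨆ k : ℕ, ⨆ _ : ∃ y ∈ H, N ^ k • y = t, ((k + 1 : ℕ) : ℕ∞)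

theorem lt_powHeight_iff {H : Submodule ℤ M} {t : M} {k : ℕ} :
    (k : ℕ∞) < powHeight N H t ↔ ∃ y ∈ H, N ^ k • y = t := by
  simp only [powHeight, lt_iSup_iff, Nat.cast_lt, exists_prop]
  constructor
  · rintro ⟨l, ⟨y, hy, rfl⟩, hkl⟩
    obtain ⟨d, rfl⟩ := Nat.exists_eq_add_of_le (Nat.lt_succ_iff.1 hkl)
    exact ⟨N ^ d • y, nsmul_mem hy _, by rw [pow_add, mul_smul]⟩
  · exact fun h => ⟨k, h, k.lt_succ_self⟩

theorem powHeight_mono {H K : Submodule ℤ M} (hHK : H ≤ K) (t : M) :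
    powHeight N H t ≤ powHeight N K t :=
  iSup_mono fun _ => iSup_mono' fun ⟨y, hy, ht⟩ => ⟨⟨y, hHK hy, ht⟩, le_rfl⟩

theorem le_of_powHeight_le (hM : IsPowTorsion N M) {H K : Submodule ℤ M} (hHK : H ≤ K)
    (h : ∀ t, N • t = 0 → powHeight N K t ≤ powHeight N H t) : K ≤ H := by
  have key : ∀ k : ℕ, ∀ x ∈ K, N ^ k • x = 0 → x ∈ H := by
    intro k
    induction k with
    | zero => intro x _ hx; simp [show x = 0 by simpa using hx]
    | succ k ih =>
      intro x hxK hx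
      obtain ⟨y, hyH, hy⟩ := lt_powHeight_iff.1 ((lt_powHeight_iff.2 ⟨x, hxK, rfl⟩).trans_le
        (h (N ^ k • x) (by rw [← mul_smul, ← pow_succ', hx])))
      have hxy : x - y ∈ H := ih _ (sub_mem hxK (hHK hyH)) (by rw [smul_sub, hy, sub_self])
      simpa using add_mem hxy hyH
  exact fun x hx => (hM x).elim fun k hk => key k x hx hk

/-- The heights of the finitely many `N`-torsion elements in a submodule define a strictly monotone
map from submodules to the well-founded order `M[N] → ℕ∞`. -/
theorem IsPowTorsion.isArtinian (hM : IsPowTorsion N M) (hfin : {x : M | N • x = 0}.Finite) :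
    IsArtinian ℤ M := by
  have : Finite {x : M | N • x = 0} := hfin
  let height (H : Submodule ℤ M) (t : {x : M | N • x = 0}) : ℕ∞ := powHeight N H t
  have hstrict : StrictMono height := fun H K hlt => by
    refine lt_of_le_not_ge (fun t => powHeight_mono hlt.le t) fun hge => ?_
    exact hlt.not_ge (le_of_powHeight_le hM hlt.le fun t ht => hge ⟨t, ht⟩)
  exact hstrict.wellFoundedLT

theorem finite_of_isArtinian_of_smul_eq_zero [IsArtinian ℤ M] {n : ℕ} (hn : n ≠ 0)
    (h : ∀ x : M, n • x = 0) : Finite M := by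
  have : NeZero n := ⟨hn⟩
  have hfin (_ : Module (ZMod n) M) : Finite M := by
    have : IsArtinian (ZMod n) M := isArtinian_of_tower ℤ inferInstance
    have : IsNoetherian (ZMod n) M := IsSemiprimaryRing.isNoetherian_iff_isArtinian.2 this
    exact Module.finite_of_finite (ZMod n)
  exact hfin (AddCommGroup.zmodModule h)

theorem finite_torsion_of_isArtinian [IsArtinian ℤ M] {n : ℕ} (hn : n ≠ 0) :
    {x : M | n • x = 0}.Finite := by
  have : Finite (Submodule.torsionBy ℤ M (n : ℤ)) :=
    finite_of_isArtinian_of_smul_eq_zero hn fun x => by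
      rw [← natCast_zsmul]
      exact Submodule.smul_torsionBy (n : ℤ) x
  exact (Set.toFinite (Submodule.torsionBy ℤ M (n : ℤ) : Set M)).subset fun x hx => by
    simpa using hx

theorem exists_pow_smul_eq_pow_succ_smul [IsArtinian ℤ M] (N : ℕ) :
    ∃ k : ℕ, ∀ x : M, ∃ y : M, N ^ k • x = N ^ (k + 1) • y := by
  let f : Module.End ℤ M := (N : Module.End ℤ M)
  have hf (k : ℕ) (x : M) : (f ^ k) x = N ^ k • x := by
    rw [← Nat.cast_pow, Module.End.natCast_apply]
  obtain ⟨k, hk⟩ := IsArtinian.monotone_stabilizes f.iterateRange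
  refine ⟨k, fun x => ?_⟩
  have hrange : LinearMap.range (f ^ k) = LinearMap.range (f ^ (k + 1)) := hk (k + 1) k.le_succ
  obtain ⟨y, hy⟩ : (f ^ k) x ∈ LinearMap.range (f ^ (k + 1)) :=
    hrange ▸ LinearMap.mem_range_self _ x
  exact ⟨y, by rw [← hf, ← hf, hy]⟩

/-- The divisible part of `M` is the stable term of the chain `N ^ k • M`. -/
theorem exists_divisible_submodule_of_isArtinian (R : Type*) [CommRing R] [Module R M]
    [IsArtinian ℤ M] (hN : N ≠ 0) :
    ∃ (D : Submodule R M) (f : M →ₗ[R] D), Function.Surjective f ∧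
      (Function.Surjective fun x : D => N • x) ∧ Finite (M ⧸ D) := by
  obtain ⟨k, hk⟩ := exists_pow_smul_eq_pow_succ_smul (M := M) N
  let f : M →ₗ[R] M := N ^ k • LinearMap.id
  refine ⟨LinearMap.range f, f.rangeRestrict, f.surjective_rangeRestrict, ?_, ?_⟩
  · rintro ⟨_, x, rfl⟩
    obtain ⟨y, hy⟩ := hk x
    refine ⟨⟨f y, y, rfl⟩, Subtype.ext ?_⟩
    change N • N ^ k • y = N ^ k • x
    rw [hy, pow_succ', mul_smul]
  · have : IsArtinian ℤ (M ⧸ LinearMap.range f) :=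
      isArtinian_of_surjective M ((LinearMap.range f).mkQ.restrictScalars ℤ)
        (LinearMap.range f).mkQ_surjective
    refine finite_of_isArtinian_of_smul_eq_zero (pow_ne_zero k hN) fun x => ?_
    obtain ⟨x, rfl⟩ := (LinearMap.range f).mkQ_surjective x
    rw [← map_nsmul]
    exact (Submodule.Quotient.mk_eq_zero _).2 ⟨x, rfl⟩

end Artinian

/-- Artinian groups all of whose elements are killed by a power of `N`: for `N ≠ 0` these are the
Černikov groups whose elements have orders dividing powers of `N`. -/
structure IsArtinianPowTorsion (N : ℕ) (E : Type*) [AddCommGroup E] : Prop where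
  isArtinian : IsArtinian ℤ E
  isPowTorsion : IsPowTorsion N E

namespace IsArtinianPowTorsion

variable {N : ℕ} {E F G : Type*} [AddCommGroup E] [AddCommGroup F] [AddCommGroup G]

theorem of_injective (f : E →+ F) (hf : Function.Injective f) (h : IsArtinianPowTorsion N F) :
    IsArtinianPowTorsion N E :=
  have := h.isArtinian
  ⟨isArtinian_of_injective f.toIntLinearMap hf, h.isPowTorsion.of_injective f hf⟩

theorem of_surjective (f : E →+ F) (hf : Function.Surjective f) (h : IsArtinianPowTorsion N E) :
    IsArtinianPowTorsion N F :=
  have := h.isArtinian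
  ⟨isArtinian_of_surjective E f.toIntLinearMap hf, h.isPowTorsion.of_surjective f hf⟩

theorem of_exact {f : E →+ F} {g : F →+ G} (hfg : Function.Exact f g)
    (hE : IsArtinianPowTorsion N E) (hG : IsArtinianPowTorsion N G) : IsArtinianPowTorsion N F :=
  have := hE.isArtinian
  have := hG.isArtinian
  ⟨isArtinian_of_range_eq_ker f.toIntLinearMap g.toIntLinearMap (by ext x; exact (hfg x).symm),
    .of_exact hfg hE.isPowTorsion hG.isPowTorsion⟩

theorem of_subsingleton [Subsingleton E] : IsArtinianPowTorsion N E :=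
  ⟨inferInstance, fun _ => ⟨0, Subsingleton.elim _ _⟩⟩

theorem pi (h : IsArtinianPowTorsion N E) (ι : Type*) [Finite ι] :
    IsArtinianPowTorsion N (ι → E) :=
  have := h.isArtinian
  ⟨inferInstance, fun x => (h.isPowTorsion.exists_forall_pow_smul_eq_zero x).imp
    fun _ hk => funext hk⟩

end IsArtinianPowTorsion

/-! ### Divisible groups and Prüfer groups -/

/-- Multiplication by every nonzero natural number is surjective on `D` (the existence version of
Mathlib's `DivisibleBy D ℕ`, which carries a choice of quotients). -/
def IsDivisible (D : Type*) [AddCommGroup D] : Prop :=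
  ∀ n : ℕ, n ≠ 0 → Function.Surjective fun x : D => n • x

namespace IsDivisible

variable {D E : Type*} [AddCommGroup D] [AddCommGroup E]

theorem of_surjective (f : D →+ E) (hf : Function.Surjective f) (h : IsDivisible D) :
    IsDivisible E := fun n hn x => by
  obtain ⟨x, rfl⟩ := hf x
  obtain ⟨y, rfl⟩ := h n hn x
  exact ⟨f y, (map_nsmul f n y).symm⟩

theorem baer (h : IsDivisible D) : Module.Baer ℤ D :=
  let _ : DivisibleBy D ℕ := divisibleByOfSMulRightSurj D ℕ fun {n} hn => h n hn
  let _ : DivisibleBy D ℤ := AddGroup.divisibleByIntOfDivisibleByNat D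
  Module.Baer.of_divisible D

theorem of_isPowTorsion {N : ℕ} (hD : IsPowTorsion N D)
    (hN : Function.Surjective fun x : D => N • x) : IsDivisible D := by
  intro n
  induction n using induction_on_primes with
  | zero => exact fun h => absurd rfl h
  | one => exact fun _ x => ⟨x, one_smul ℕ x⟩
  | prime_mul p m hp ih =>
    intro hpm
    suffices hsurj : Function.Surjective fun x : D => p • x by
      simpa only [Function.comp_def, mul_smul] using hsurj.comp (ih (right_ne_zero_of_mul hpm))
    intro x
    by_cases hpN : p ∣ N
    · obtain ⟨c, rfl⟩ := hpN
      obtain ⟨y, hy⟩ := hN x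
      exact ⟨c • y, by simpa only [mul_smul] using hy⟩
    · obtain ⟨k, hk⟩ := hD x
      obtain ⟨a, b, hab⟩ := Nat.isCoprime_iff_coprime.2
        (((Nat.Prime.coprime_iff_not_dvd hp).2 hpN).pow_right k)
      refine ⟨a • x, ?_⟩
      calc p • a • x = (a * p) • x + b • (N ^ k) • x := by
            rw [hk, smul_zero, add_zero, mul_comm, mul_smul, natCast_zsmul]
        _ = (a * p + b * (N ^ k : ℕ)) • x := by rw [add_smul, mul_smul b, natCast_zsmul]
        _ = x := by rw [hab, one_smul]

end IsDivisible

section Prufer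

variable {p : ℕ}

theorem pruferSubgroup_isPowTorsion (p : ℕ) : IsPowTorsion p (pruferSubgroup p) :=
  fun ⟨_, n, hn⟩ => ⟨n, Subtype.ext hn⟩

theorem pruferSubgroup_isArtinian (hp : p ≠ 0) : IsArtinian ℤ (pruferSubgroup p) :=
  (pruferSubgroup_isPowTorsion p).isArtinian <|
    ((AddCircle.finite_torsion (1 : ℚ) (Nat.pos_of_ne_zero hp)).preimage
      Subtype.val_injective.injOn).subset fun _ hx => congrArg Subtype.val hx

theorem ratCircle_isDivisible : IsDivisible RatCircle :=
  .of_surjective (QuotientAddGroup.mk' _) (QuotientAddGroup.mk'_surjective _) fun n hn q =>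
    ⟨q / n, by simp only [nsmul_eq_mul]; field_simp⟩

theorem pruferSubgroup_isDivisible (hp : p ≠ 0) : IsDivisible (pruferSubgroup p) := by
  refine .of_isPowTorsion (pruferSubgroup_isPowTorsion p) ?_
  rintro ⟨x, n, hn⟩
  obtain ⟨y, hy⟩ := ratCircle_isDivisible p hp x
  refine ⟨⟨y, n + 1, ?_⟩, Subtype.ext hy⟩
  rw [pow_succ, mul_smul, show p • y = x from hy, hn]

theorem pruferSubgroup_exists_generator_socle (hp : p ≠ 0) :
    ∃ e : pruferSubgroup p, addOrderOf e = p ∧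
      ∀ x, p • x = 0 → x ∈ AddSubgroup.zmultiples e := by
  have hpos : 0 < p := Nat.pos_of_ne_zero hp
  have horder : addOrderOf (((1 / p : ℚ) : AddCircle (1 : ℚ))) = p :=
    AddCircle.addOrderOf_period_div (p := (1 : ℚ)) hpos
  have hmem : ((1 / p : ℚ) : AddCircle (1 : ℚ)) ∈ pruferSubgroup p :=
    ⟨1, by simpa only [pow_one, horder] using
      addOrderOf_nsmul_eq_zero ((1 / p : ℚ) : AddCircle (1 : ℚ))⟩
  refine ⟨⟨_, hmem⟩, by rw [AddSubgroup.addOrderOf_mk, horder], fun x hx => ?_⟩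
  obtain ⟨m, -, hm⟩ := (AddCircle.nsmul_eq_zero_iff (p := (1 : ℚ)) hpos).1 (congrArg Subtype.val hx)
  refine ⟨m, Subtype.ext ?_⟩
  change (m : ℤ) • ((1 / p : ℚ) : AddCircle (1 : ℚ)) = x
  rw [← hm, natCast_zsmul, ← AddCircle.coe_nsmul]
  congr 1
  rw [nsmul_eq_mul]
  ring

end Prufer

section Splitting

variable {D : Type*} [AddCommGroup D]

theorem exists_addOrderOf_eq_prime {x : D} (hx : x ≠ 0) (hfin : IsOfFinAddOrder x) :
    ∃ (p : ℕ) (w : D), p.Prime ∧ addOrderOf w = p :=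
  have ⟨p, hp, hdvd⟩ := Nat.exists_prime_and_dvd (mt AddMonoid.addOrderOf_eq_one_iff.1 hx)
  ⟨p, _, hp, addOrderOf_nsmul_addOrderOf_sub hfin.addOrderOf_pos.ne' hdvd⟩

theorem exists_zmultiples_addEquiv {E : Type*} [AddGroup E] {a : D} {b : E}
    (h : addOrderOf a = addOrderOf b) :
    ∃ i : AddSubgroup.zmultiples a ≃+ AddSubgroup.zmultiples b,
      i ⟨a, AddSubgroup.mem_zmultiples a⟩ = ⟨b, AddSubgroup.mem_zmultiples b⟩ :=
  ⟨addEquivOfAddOrderOfEq (fun ⟨_, k, hk⟩ => ⟨k, Subtype.ext hk⟩)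
    (fun ⟨_, k, hk⟩ => ⟨k, Subtype.ext hk⟩) (by simpa only [AddSubgroup.addOrderOf_mk]),
    addEquivOfAddOrderOfEq_apply_gen _ _ _⟩

theorem IsDivisible.exists_injective_pruferSubgroup (hD : IsDivisible D) {w : D} {p : ℕ}
    (hw : addOrderOf w = p) (hp : p ≠ 0) :
    ∃ f : pruferSubgroup p →+ D, Function.Injective f ∧ w ∈ f.range := by
  obtain ⟨e, he, hsocle⟩ := pruferSubgroup_exists_generator_socle hp
  obtain ⟨i, hi⟩ := exists_zmultiples_addEquiv (he.trans hw.symm)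
  obtain ⟨f, hf⟩ := hD.baer.extension_property_addMonoidHom (AddSubgroup.zmultiples e).subtype
    Subtype.val_injective ((AddSubgroup.zmultiples w).subtype.comp i.toAddMonoidHom)
  have hfi (x : AddSubgroup.zmultiples e) : f x = i x := DFunLike.congr_fun hf x
  refine ⟨f, (pruferSubgroup_isPowTorsion _).injective_of_torsion f fun x hpx hx => ?_, e, ?_⟩
  · have hix : i ⟨x, hsocle x hpx⟩ = 0 := Subtype.ext ((hfi ⟨x, hsocle x hpx⟩).symm.trans hx)
    exact congrArg Subtype.val (i.injective (hix.trans (map_zero i).symm))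
  · exact (hfi ⟨e, _⟩).trans (congrArg Subtype.val hi)

/-- The copy of the Prüfer group generated over `w` is injective, hence a direct summand. -/
theorem IsDivisible.exists_equiv_pruferSubgroup_prod (hD : IsDivisible D) {w : D} {p : ℕ}
    (hw : addOrderOf w = p) (hp : p ≠ 0) (hw0 : w ≠ 0) :
    ∃ K : Submodule ℤ D, K < ⊤ ∧ Nonempty (D ≃+ K × pruferSubgroup p) := by
  obtain ⟨f, hf, e, rfl⟩ := hD.exists_injective_pruferSubgroup hw hp
  obtain ⟨g, hgf⟩ := (pruferSubgroup_isDivisible hp).baer.extension_property f.toIntLinearMap hf .id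
  refine ⟨LinearMap.ker g, lt_top_iff_ne_top.2 fun htop => hw0 ?_, ⟨LinearEquiv.toAddEquiv
    ((LinearMap.exact_subtype_ker_map g).splitSurjectiveEquiv (LinearMap.ker g).injective_subtype
      ⟨_, hgf⟩).1⟩⟩
  have he : g (f e) = e := LinearMap.congr_fun hgf e
  rw [← he, LinearMap.mem_ker.1 (htop ▸ Submodule.mem_top : f e ∈ LinearMap.ker g), map_zero]

end Splitting

/-! ### Černikov groups -/

section Cernikov

variable {M : Type*} [AddCommGroup M] {N : ℕ} {ω : Set ℕ}

theorem IsCernikov.isArtinian (h : IsCernikov M) : IsArtinian ℤ M := by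
  obtain ⟨S, r, p, hS, hp, ⟨e⟩⟩ := h
  have (i : Fin r) : IsArtinian ℤ (pruferSubgroup (p i)) := pruferSubgroup_isArtinian (hp i).ne_zero
  have : Finite (M ⧸ AddSubgroup.toIntSubmodule S) := AddSubgroup.index_ne_zero_iff_finite.1 hS
  exact (isArtinian_iff_submodule_quotient (AddSubgroup.toIntSubmodule S)).2
    ⟨isArtinian_of_injective (M := S) e.toIntLinearEquiv.toLinearMap e.injective, inferInstance⟩

theorem IsDivisible.exists_pi_pruferSubgroup [IsArtinian ℤ M] (htors : ∀ x : M, IsOfFinAddOrder x)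
    (D : Submodule ℤ M) (hD : IsDivisible D) :
    ∃ (r : ℕ) (p : Fin r → ℕ), (∀ i, (p i).Prime) ∧
      Nonempty (D ≃+ ((i : Fin r) → pruferSubgroup (p i))) := by
  induction D using WellFoundedLT.induction with
  | ind D ih =>
  rcases subsingleton_or_nontrivial D with _ | _
  · exact ⟨0, Fin.elim0, Fin.rec0, ⟨@AddEquiv.ofUnique _ _ (.mk' _) _ _ _⟩⟩
  obtain ⟨x, hx⟩ := exists_ne (0 : D)
  obtain ⟨p, w, hp, hw⟩ := exists_addOrderOf_eq_prime hx
    (AddSubmonoid.isOfFinAddOrder_coe.1 (htors x) : IsOfFinAddOrder x)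
  have hw0 : w ≠ 0 := fun h => hp.ne_one (by rw [← hw, h, addOrderOf_zero])
  obtain ⟨K, hK, ⟨e⟩⟩ := hD.exists_equiv_pruferSubgroup_prod hw hp.ne_zero hw0
  let eK : K ≃+ K.map D.subtype := (D.equivSubtypeMap K).toAddEquiv
  have hKdiv : IsDivisible (K.map D.subtype) :=
    hD.of_surjective ((eK.toAddMonoidHom.comp (.fst K _)).comp e.toAddMonoidHom)
      (eK.surjective.comp (Prod.fst_surjective.comp e.surjective))
  have hlt : K.map D.subtype < D := by
    simpa using Submodule.map_strictMono_of_injective D.injective_subtype hK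
  obtain ⟨r, q, hq, ⟨eq⟩⟩ := ih _ hlt hKdiv
  let ec := Fin.consLinearEquiv ℤ
    fun i : Fin (r + 1) => pruferSubgroup (Fin.cons (α := fun _ => ℕ) p q i)
  exact ⟨r + 1, Fin.cons p q, Fin.cases hp hq,
    ⟨(e.trans (AddEquiv.prodComm.trans ((AddEquiv.refl _).prodCongr (eK.trans eq)))).trans
      ec.toAddEquiv⟩⟩

theorem IsPowTorsion.isOfFinAddOrder (hN : N ≠ 0) (h : IsPowTorsion N M) (x : M) :
    IsOfFinAddOrder x :=
  (h x).elim fun k hk =>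
    isOfFinAddOrder_iff_nsmul_eq_zero.2 ⟨N ^ k, Nat.pos_of_ne_zero (pow_ne_zero k hN), hk⟩

theorem IsArtinianPowTorsion.isCernikov (hN : N ≠ 0) (h : IsArtinianPowTorsion N M) :
    IsCernikov M := by
  have := h.isArtinian
  obtain ⟨D, f, hf, hDN, _⟩ := exists_divisible_submodule_of_isArtinian (M := M) ℤ hN
  have hD : IsDivisible D := .of_isPowTorsion (h.isPowTorsion.of_surjective f.toAddMonoidHom hf) hDN
  obtain ⟨r, p, hp, e⟩ := hD.exists_pi_pruferSubgroup (h.isPowTorsion.isOfFinAddOrder hN)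
  exact ⟨D.toAddSubgroup, r, p, AddSubgroup.index_ne_zero_iff_finite.2 ‹_›, hp, e⟩

theorem IsPowTorsion.isOmegaTorsion (hN : N ≠ 0) (hω : ∀ p : ℕ, p.Prime → p ∣ N → p ∈ ω)
    (h : IsPowTorsion N M) : IsOmegaTorsion ω M := fun a => by
  refine ⟨h.isOfFinAddOrder hN a, fun p hp hdvd => hω p hp ?_⟩
  obtain ⟨k, hk⟩ := h a
  exact hp.dvd_of_dvd_pow ((Int.natCast_dvd_natCast.1 hdvd).trans
    (addOrderOf_dvd_of_nsmul_eq_zero hk))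

end Cernikov

section CoprimeSaturation

variable {R M : Type*} [CommRing R] [AddCommGroup M] [Module R M]

/-- The elements having a multiple in `P` by a natural number coprime to `N`. -/
def coprimeSaturation (N : ℕ) (P : Submodule R M) : Submodule R M where
  carrier := {a | ∃ m : ℕ, m.Coprime N ∧ m • a ∈ P}
  zero_mem' := ⟨1, N.coprime_one_left, by simp⟩
  add_mem' := by
    rintro a b ⟨m, hm, ha⟩ ⟨n, hn, hb⟩
    refine ⟨m * n, hm.mul_left hn, ?_⟩
    rw [smul_add, mul_smul m n b, mul_comm, mul_smul]
    exact add_mem (nsmul_mem ha n) (nsmul_mem hb m)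
  smul_mem' := by
    rintro c a ⟨m, hm, ha⟩
    exact ⟨m, hm, by rw [smul_comm]; exact P.smul_mem c ha⟩

theorem le_coprimeSaturation (N : ℕ) (P : Submodule R M) : P ≤ coprimeSaturation N P :=
  fun a ha => ⟨1, N.coprime_one_left, by rwa [one_smul]⟩

theorem exists_dvd_pow_mul_coprime (N : ℕ) {n : ℕ} (hn : n ≠ 0) :
    ∃ j m : ℕ, m.Coprime N ∧ n ∣ m * N ^ j := by
  induction n using induction_on_primes with
  | zero => exact absurd rfl hn
  | one => exact ⟨0, 1, N.coprime_one_left, one_dvd _⟩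
  | prime_mul p n hp ih =>
    obtain ⟨j, m, hm, hdvd⟩ := ih (right_ne_zero_of_mul hn)
    by_cases hpN : p ∣ N
    · refine ⟨j + 1, m, hm, ?_⟩
      rw [pow_succ', mul_left_comm]
      exact mul_dvd_mul hpN hdvd
    · refine ⟨j, p * m, ((Nat.Prime.coprime_iff_not_dvd hp).2 hpN).mul_left hm, ?_⟩
      rw [mul_assoc]
      exact mul_dvd_mul_left p hdvd

theorem exists_pow_smul_mem_coprimeSaturation (N : ℕ) {P : Submodule R M} {n : ℕ} (hn : n ≠ 0)
    {a : M} (ha : n • a ∈ P) : ∃ j : ℕ, N ^ j • a ∈ coprimeSaturation N P := by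
  obtain ⟨j, m, hm, c, hc⟩ := exists_dvd_pow_mul_coprime N hn
  exact ⟨j, m, hm, by rw [← mul_smul, hc, mul_comm, mul_smul]; exact nsmul_mem ha c⟩

theorem coprimeSaturation_mul_le (N n : ℕ) (P : Submodule R M) :
    coprimeSaturation (N * n) P ≤ coprimeSaturation N P :=
  fun _ ⟨m, hm, ha⟩ => ⟨m, hm.coprime_mul_right_right, ha⟩

end CoprimeSaturation

/-- Among the numbers `N` with prime factors in `ω`, choose one whose prime-to-`N` torsion is
minimal; adjoining the order of one of its elements to `N` shows that it vanishes. -/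
theorem IsOmegaTorsion.exists_isPowTorsion {M : Type*} [AddCommGroup M] [IsArtinian ℤ M]
    {ω : Set ℕ} (h : IsOmegaTorsion ω M) :
    ∃ N : ℕ, N ≠ 0 ∧ (∀ p : ℕ, p.Prime → p ∣ N → p ∈ ω) ∧ IsPowTorsion N M := by
  let torsion (N : ℕ) : Submodule ℤ M := coprimeSaturation N ⊥
  obtain ⟨_, ⟨N, ⟨hN, hNω⟩, rfl⟩, hmin⟩ := IsArtinian.set_has_minimal
    (torsion '' {N : ℕ | N ≠ 0 ∧ ∀ p : ℕ, p.Prime → p ∣ N → p ∈ ω})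
    ⟨_, 1, ⟨one_ne_zero, fun p hp hp1 => absurd (Nat.dvd_one.1 hp1) hp.ne_one⟩, rfl⟩
  have hbot (b : M) (hb : b ∈ torsion N) : b = 0 := by
    obtain ⟨hfin, hω⟩ := h b
    have hmul : torsion (N * addOrderOf b) = torsion N := by
      refine (coprimeSaturation_mul_le N (addOrderOf b) ⊥).eq_of_not_lt (hmin _ ⟨_, ⟨mul_ne_zero hN
        hfin.addOrderOf_pos.ne', fun p hp hdvd => ?_⟩, rfl⟩)
      exact ((hp.dvd_mul).1 hdvd).elim (hNω p hp) fun hp' => hω p hp (mod_cast hp')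
    obtain ⟨m, hm, hmb⟩ := hmul ▸ hb
    exact AddMonoid.addOrderOf_eq_one_iff.1 (Nat.Coprime.eq_one_of_dvd
      hm.coprime_mul_left_right.symm (addOrderOf_dvd_of_nsmul_eq_zero hmb))
  refine ⟨N, hN, hNω, fun x => ?_⟩
  obtain ⟨j, hj⟩ := exists_pow_smul_mem_coprimeSaturation N (P := (⊥ : Submodule ℤ M))
    (h x).1.addOrderOf_pos.ne' (addOrderOf_nsmul_eq_zero x)
  exact ⟨j, hbot _ hj⟩

theorem isCernikovOmega_iff {M : Type*} [AddCommGroup M] {ω : Set ℕ} :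
    IsCernikovOmega ω M ↔ ∃ N : ℕ, N ≠ 0 ∧ (∀ p : ℕ, p.Prime → p ∣ N → p ∈ ω) ∧
      IsArtinianPowTorsion N M := by
  constructor
  · rintro ⟨hC, hω⟩
    have := hC.isArtinian
    obtain ⟨N, hN, hNω, hM⟩ := hω.exists_isPowTorsion
    exact ⟨N, hN, hNω, this, hM⟩
  · rintro ⟨N, hN, hNω, hM⟩
    exact ⟨hM.isCernikov hN, hM.isPowTorsion.isOmegaTorsion hN hNω⟩

/-! ### Dimension shifting -/

section DimensionShifting

open Abelian

universe w v u

variable {C : Type u} [Category.{v} C] [Abelian C]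

/-- The class `P` of objects contains injective resolutions of its members: each of them embeds
into an injective object of `P` with cokernel in `P`. -/
def HasInjectiveEmbeddings (P : ObjectProperty C) : Prop :=
  ∀ Y, P Y → ∃ (J K : C) (f : Y ⟶ J) (g : J ⟶ K) (w : f ≫ g = 0),
    (ShortComplex.mk f g w).ShortExact ∧ Injective J ∧ P J ∧ P K

namespace HasInjectiveEmbeddings

variable [HasExt.{w} C] {P : ObjectProperty C}

theorem subsingleton_ext (hP : HasInjectiveEmbeddings P) {T : C}
    (hT : ∀ Y, P Y → ∀ f : T ⟶ Y, f = 0) (n : ℕ) {Y : C} (hY : P Y) :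
    Subsingleton (Ext T Y n) := by
  induction n generalizing Y with
  | zero =>
    refine (Ext.homEquiv₀.subsingleton_congr).2 ⟨fun f g => ?_⟩
    rw [hT Y hY f, hT Y hY g]
  | succ n ih =>
    obtain ⟨J, K, f, g, w, hS, _, -, hK⟩ := hP Y hY
    have := ih hK
    have hd (e : Ext T Y (n + 1)) : e = 0 := by
      obtain ⟨e', rfl⟩ := Ext.covariant_sequence_exact₁ T hS e (Ext.eq_zero_of_injective _) rfl
      rw [Subsingleton.elim e' 0, Ext.zero_comp]
    exact ⟨fun a b => by rw [hd a, hd b]⟩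

theorem mk₀_app_comp_eq_comp_mk₀_app (hP : HasInjectiveEmbeddings P) (τ : P.ι ⟶ P.ι)
    {X : C} (hX : P X) (n : ℕ) {Y : C} (hY : P Y) (e : Ext X Y n) :
    (Ext.mk₀ (τ.app ⟨X, hX⟩)).comp e (zero_add n) =
      e.comp (Ext.mk₀ (τ.app ⟨Y, hY⟩)) (add_zero n) := by
  have hτ {Y Z : C} (hY : P Y) (hZ : P Z) (f : Y ⟶ Z) :
      τ.app ⟨Y, hY⟩ ≫ f = f ≫ τ.app ⟨Z, hZ⟩ :=
    (τ.naturality (X := ⟨Y, hY⟩) (Y := ⟨Z, hZ⟩) (ObjectProperty.homMk f)).symm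
  induction n generalizing Y with
  | zero =>
    obtain ⟨f, rfl⟩ := (Ext.mk₀_bijective X Y).2 e
    rw [Ext.mk₀_comp_mk₀, Ext.mk₀_comp_mk₀, hτ hX hY f]
  | succ n ih =>
    obtain ⟨J, K, f, g, w, hS, _, hJ, hK⟩ := hP Y hY
    obtain ⟨e', rfl⟩ := Ext.covariant_sequence_exact₁ X hS e (Ext.eq_zero_of_injective _) rfl
    let φ : ShortComplex.mk f g w ⟶ ShortComplex.mk f g w :=
      { τ₁ := τ.app ⟨Y, hY⟩, τ₂ := τ.app ⟨J, hJ⟩, τ₃ := τ.app ⟨K, hK⟩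
        comm₁₂ := hτ hY hJ f
        comm₂₃ := hτ hJ hK g }
    have hφ := ShortComplex.ShortExact.extClass_naturality hS hS φ
    rw [← Ext.comp_assoc _ _ _ (zero_add n) _ (by omega), ih hK,
      Ext.comp_assoc_of_second_deg_zero, Ext.comp_assoc _ _ _ _ (add_zero 1) (by omega)]
    exact congrArg (e'.comp · rfl) hφ.symm

end HasInjectiveEmbeddings

end DimensionShifting

section ExtPowTorsion

open Abelian

universe w v u

section Abelian

variable {C : Type u} [Category.{v} C] [Abelian C] [HasExt.{w} C] {N : ℕ} {S : ShortComplex C}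

theorem IsArtinianPowTorsion.ext_of_shortExact_left (hS : S.ShortExact) (Y : C) (n : ℕ)
    (h₃ : IsArtinianPowTorsion N (Ext S.X₃ Y n)) (h₁ : IsArtinianPowTorsion N (Ext S.X₁ Y n)) :
    IsArtinianPowTorsion N (Ext S.X₂ Y n) :=
  .of_exact ((ShortComplex.ab_exact_iff_function_exact _).1
    (Ext.contravariant_sequence_exact₂' hS Y n)) h₃ h₁

theorem IsArtinianPowTorsion.ext_of_shortExact_right (hS : S.ShortExact) (X : C) (n : ℕ)
    (h₁ : IsArtinianPowTorsion N (Ext X S.X₁ n)) (h₃ : IsArtinianPowTorsion N (Ext X S.X₃ n)) :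
    IsArtinianPowTorsion N (Ext X S.X₂ n) :=
  .of_exact ((ShortComplex.ab_exact_iff_function_exact _).1
    (Ext.covariant_sequence_exact₂' X hS n)) h₁ h₃

theorem nsmul_eq_comp_mk₀ (m : ℕ) {X Y : C} {n : ℕ} (e : Ext X Y n) :
    m • e = e.comp (Ext.mk₀ (m • 𝟙 Y)) (add_zero n) := by
  have h : Ext.mk₀ (m • 𝟙 Y) = m • Ext.mk₀ (𝟙 Y) := map_nsmul Ext.addEquiv₀.symm m (𝟙 Y)
  conv_lhs => rw [← Ext.comp_mk₀_id e]
  rw [h]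
  exact (map_nsmul (e.precomp Y (add_zero n)) m (Ext.mk₀ (𝟙 Y))).symm

theorem nsmul_eq_mk₀_comp (m : ℕ) {X Y : C} {n : ℕ} (e : Ext X Y n) :
    m • e = (Ext.mk₀ (m • 𝟙 X)).comp e (zero_add n) := by
  have h : Ext.mk₀ (m • 𝟙 X) = m • Ext.mk₀ (𝟙 X) := map_nsmul Ext.addEquiv₀.symm m (𝟙 X)
  conv_lhs => rw [← Ext.mk₀_id_comp e]
  rw [h]
  exact (map_nsmul (e.postcomp X (zero_add n)) m (Ext.mk₀ (𝟙 X))).symm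

end Abelian

variable {R : Type u} [CommRing R] {N : ℕ}

theorem IsArtinianPowTorsion.ext_of_finite [IsNoetherianRing R] {B : ModuleCat.{u} R}
    (hB : IsArtinianPowTorsion N B) (n : ℕ) (A : ModuleCat.{u} R) [Module.Finite R A] :
    IsArtinianPowTorsion N (Ext A B n) := by
  induction n generalizing A with
  | zero =>
    obtain ⟨k, s, hs⟩ := Module.Finite.exists_fin (R := R) (M := A)
    let toHom : Ext A B 0 ≃+ (A →ₗ[R] B) := Ext.addEquiv₀.trans ModuleCat.homAddEquiv
    let evalAt (i : Fin k) : (A →ₗ[R] B) →+ B := (LinearMap.applyₗ (R := R) (s i)).toAddMonoidHom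
    refine (hB.pi (Fin k)).of_injective ((AddMonoidHom.pi evalAt).comp toHom.toAddMonoidHom) ?_
    exact fun f g hfg => toHom.injective (LinearMap.ext_on_range hs (congrFun hfg))
  | succ n ih =>
    obtain ⟨M, _, _, _, _, f, hf⟩ := Module.exists_finite_presentation R A
    have hS := LinearMap.shortExact_shortComplexKer hf
    exact (ih _).of_surjective (hS.extClass.precomp B (add_comm 1 n))
      (precomp_extClass_surjective_of_projective_X₂ B hS n)

end ExtPowTorsion

section InjectivePowTorsion

universe u

variable {R : Type u} [CommRing R] {N : ℕ} {X : Type*} [AddCommGroup X] [Module R X]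

theorem IsPowTorsion.exists_pow_smul_linearMap_eq_zero {M : Type*} [AddCommMonoid M] [Module R M]
    [Module.Finite R M] (hX : IsPowTorsion N X) (f : M →ₗ[R] X) : ∃ k : ℕ, N ^ k • f = 0 := by
  obtain ⟨r, s, hs⟩ := Module.Finite.exists_fin (R := R) (M := M)
  obtain ⟨k, hk⟩ := hX.exists_forall_pow_smul_eq_zero (f ∘ s)
  exact ⟨k, LinearMap.ext_on_range hs hk⟩

theorem mem_torsion'_powers_iff {x : X} :
    x ∈ Submodule.torsion' R X (Submonoid.powers N) ↔ ∃ k : ℕ, N ^ k • x = 0 :=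
  ⟨fun ⟨⟨_, k, hk⟩, hx⟩ => ⟨k, by subst hk; exact hx⟩, fun ⟨k, hk⟩ => ⟨⟨N ^ k, k, rfl⟩, hk⟩⟩

theorem isPowTorsion_torsion' (R : Type*) [CommRing R] (N : ℕ) (X : Type*) [AddCommGroup X]
    [Module R X] : IsPowTorsion N (Submodule.torsion' R X (Submonoid.powers N)) := by
  rintro ⟨x, hx⟩
  obtain ⟨k, hk⟩ := mem_torsion'_powers_iff.1 hx
  exact ⟨k, Subtype.ext hk⟩

theorem IsPowTorsion.exists_apply_eq_zero_of_mem_pow [IsNoetherianRing R] (hX : IsPowTorsion N X)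
    (a : Ideal R) (g : a →ₗ[R] X) :
    ∃ m : ℕ, ∀ x : a, (x : R) ∈ Ideal.span {(N : R)} ^ m → g x = 0 := by
  obtain ⟨k, hk⟩ := hX.exists_pow_smul_linearMap_eq_zero g
  obtain ⟨l, hl⟩ := Ideal.exists_pow_inf_eq_pow_smul (Ideal.span {(N : R)}) a
  refine ⟨k + l, fun x hx => ?_⟩
  have hxa : (x : R) ∈ Ideal.span {(N : R)} ^ k • a := by
    have h : (x : R) ∈ (Ideal.span {(N : R)} ^ (k + l) • ⊤ ⊓ a : Submodule R R) :=
      ⟨by simpa using hx, x.2⟩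
    rw [hl _ (Nat.le_add_left l k), Nat.add_sub_cancel] at h
    exact smul_mono_right _ (inf_le_right : _ ≤ a) h
  rw [Ideal.span_singleton_pow, Submodule.ideal_span_singleton_smul] at hxa
  obtain ⟨y, hy, hyx⟩ := hxa
  have hxy : x = N ^ k • (⟨y, hy⟩ : a) := Subtype.ext (by simp [← hyx])
  rw [hxy, map_nsmul]
  exact LinearMap.congr_fun hk ⟨y, hy⟩

/-- A map from an ideal `a` into the torsion submodule vanishes on `a ⊓ (N ^ m)` by Artin–Rees, so
it extends by zero to `a ⊔ (N ^ m)` and from there to `R`, with values killed by `N ^ m`. -/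
theorem baer_torsion' [IsNoetherianRing R] (N : ℕ) (hX : Module.Baer R X) :
    Module.Baer R (Submodule.torsion' R X (Submonoid.powers N)) := by
  intro a g
  obtain ⟨m, hm⟩ := (isPowTorsion_torsion' R N X).exists_apply_eq_zero_of_mem_pow a g
  let J : Ideal R := Ideal.span {(N : R)} ^ m
  let g₁ : R →ₗ.[R] X := ⟨a, Submodule.subtype _ ∘ₗ g⟩
  let g₂ : R →ₗ.[R] X := ⟨J, 0⟩
  have hg : ∀ (x : g₁.domain) (y : g₂.domain), (x : R) = y → g₁ x = g₂ y := fun x y hxy =>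
    congrArg Subtype.val (hm x (hxy ▸ y.2))
  obtain ⟨h, hh⟩ := hX (a ⊔ J) (g₁.sup g₂ hg).toFun
  have hh₁ (x : a) : h x = g x :=
    (hh x (le_sup_left (a := a) x.2)).trans ((g₁.left_le_sup g₂ hg).2 rfl).symm
  have hh₂ (x : J) : h x = 0 :=
    (hh x (le_sup_right (b := J) x.2)).trans ((g₁.right_le_sup g₂ hg).2 rfl).symm
  have hmem (r : R) : h r ∈ Submodule.torsion' R X (Submonoid.powers N) := by
    refine mem_torsion'_powers_iff.2 ⟨m, ?_⟩
    rw [← map_nsmul]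
    refine hh₂ ⟨N ^ m • r, ?_⟩
    rw [nsmul_eq_mul, Nat.cast_pow]
    exact J.mul_mem_right _ (Ideal.pow_mem_pow (Ideal.mem_span_singleton_self _) m)
  exact ⟨h.codRestrict _ hmem, fun x hx => Subtype.ext (hh₁ ⟨x, hx⟩)⟩

/-- The modules over `R` whose elements are killed by powers of `N`. -/
def powTorsionModules (R : Type u) [CommRing R] (N : ℕ) : ObjectProperty (ModuleCat.{u} R) :=
  fun X => IsPowTorsion N X

theorem hasInjectiveEmbeddings_powTorsionModules [IsNoetherianRing R] (N : ℕ) :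
    HasInjectiveEmbeddings (powTorsionModules R N) := by
  intro X hX
  let I : ModuleCat.{u} R := Injective.under X
  let T := Submodule.torsion' R I (Submonoid.powers N)
  have hX' : IsPowTorsion N X := hX
  have hT : Injective (ModuleCat.of R T) := by
    rw [← Module.injective_iff_injective_object]
    have : Module.Injective R I :=
      (Module.injective_iff_injective_object R I).2 (Injective.injective_under X)
    exact (baer_torsion' N (Module.Baer.of_injective this)).injective
  let ι : X →ₗ[R] T := (Injective.ι X).hom.codRestrict T fun x => by
    obtain ⟨k, hk⟩ := hX' x
    exact mem_torsion'_powers_iff.2 ⟨k, by rw [← map_nsmul, hk, map_zero]⟩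
  have hι : Function.Injective ι := fun x y hxy =>
    (ModuleCat.mono_iff_injective (Injective.ι X)).1 inferInstance (congrArg Subtype.val hxy)
  have hT' : IsPowTorsion N T := isPowTorsion_torsion' R N I
  refine ⟨ModuleCat.of R T, ModuleCat.of R (T ⧸ LinearMap.range ι), ModuleCat.ofHom ι,
    ModuleCat.ofHom (LinearMap.range ι).mkQ, by ext x; simp, ?_, hT, hT',
    hT'.of_surjective (LinearMap.range ι).mkQ.toAddMonoidHom (Submodule.mkQ_surjective _)⟩
  exact ModuleCat.shortComplex_shortExact _ (LinearMap.exact_map_mkQ_range ι) hι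
    (Submodule.mkQ_surjective _)

theorem subsingleton_ext_of_coprime_torsion [IsNoetherianRing R] {T Y : ModuleCat.{u} R}
    (hT : ∀ t : T, ∃ m : ℕ, m.Coprime N ∧ m • t = 0) (hY : IsPowTorsion N Y) (n : ℕ) :
    Subsingleton (Abelian.Ext T Y n) := by
  refine (hasInjectiveEmbeddings_powTorsionModules N).subsingleton_ext (fun Z hZ f => ?_) n hY
  ext t
  obtain ⟨m, hm, hmt⟩ := hT t
  obtain ⟨k, hk⟩ := (show IsPowTorsion N Z from hZ) (f t)
  have hmf : m • f t = 0 := by rw [← map_nsmul, hmt, map_zero]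
  exact AddMonoid.addOrderOf_eq_one_iff.1 (Nat.eq_one_of_dvd_coprimes (hm.pow_right k)
    (addOrderOf_dvd_of_nsmul_eq_zero hmf) (addOrderOf_dvd_of_nsmul_eq_zero hk))

end InjectivePowTorsion

/-! ### Infinite common quotients -/

/-- The modules `D` and `E` have isomorphic infinite quotients. -/
def HasInfiniteCommonQuotient (R D E : Type*) [Ring R] [AddCommGroup D] [Module R D]
    [AddCommGroup E] [Module R E] : Prop :=
  ∃ (P : Submodule R D) (Q : Submodule R E), Nonempty ((D ⧸ P) ≃ₗ[R] E ⧸ Q) ∧ Infinite (D ⧸ P)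

namespace HasInfiniteCommonQuotient

section Ring

variable {R D E D' E' C : Type*} [Ring R] [AddCommGroup D] [Module R D] [AddCommGroup E]
  [Module R E] [AddCommGroup D'] [Module R D'] [AddCommGroup E'] [Module R E']
  [AddCommGroup C] [Module R C]

theorem of_surjective [Infinite C] (f : D →ₗ[R] C) (g : E →ₗ[R] C) (hf : Function.Surjective f)
    (hg : Function.Surjective g) : HasInfiniteCommonQuotient R D E :=
  ⟨LinearMap.ker f, LinearMap.ker g,
    ⟨f.quotKerEquivOfSurjective hf ≪≫ₗ (g.quotKerEquivOfSurjective hg).symm⟩,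
    (f.quotKerEquivOfSurjective hf).toEquiv.infinite_iff.2 inferInstance⟩

theorem of_quotients (f : D →ₗ[R] D') (g : E →ₗ[R] E') (hf : Function.Surjective f)
    (hg : Function.Surjective g) (h : HasInfiniteCommonQuotient R D' E') :
    HasInfiniteCommonQuotient R D E :=
  have ⟨P, Q, ⟨e⟩, _⟩ := h
  of_surjective (P.mkQ ∘ₗ f) (e.symm.toLinearMap ∘ₗ Q.mkQ ∘ₗ g) (P.mkQ_surjective.comp hf)
    (e.symm.surjective.comp (Q.mkQ_surjective.comp hg))

theorem of_ker_le [Infinite C] {p : D →ₗ[R] D'} {q : E →ₗ[R] E'} (hp : Function.Surjective p)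
    (hq : Function.Surjective q) (f : D →ₗ[R] C) (g : E →ₗ[R] C) (hf : Function.Surjective f)
    (hg : Function.Surjective g) (hpf : LinearMap.ker p ≤ LinearMap.ker f)
    (hqg : LinearMap.ker q ≤ LinearMap.ker g) : HasInfiniteCommonQuotient R D' E' :=
  .of_quotients (p.quotKerEquivOfSurjective hp).symm.toLinearMap
    (q.quotKerEquivOfSurjective hq).symm.toLinearMap (LinearEquiv.surjective _)
    (LinearEquiv.surjective _) <|
  .of_surjective ((LinearMap.ker p).liftQ f hpf) ((LinearMap.ker q).liftQ g hqg)
    (.of_comp (g := (LinearMap.ker p).mkQ) hf) (.of_comp (g := (LinearMap.ker q).mkQ) hg)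

end Ring

theorem restrictScalars {R Λ D E : Type*} [CommRing R] [CommRing Λ] [Algebra R Λ] [AddCommGroup D]
    [AddCommGroup E] [Module R D] [Module R E] [Module Λ D] [Module Λ E] [IsScalarTower R Λ D]
    [IsScalarTower R Λ E] (h : HasInfiniteCommonQuotient Λ D E) :
    HasInfiniteCommonQuotient R D E :=
  have ⟨P, Q, ⟨e⟩, _⟩ := h
  of_surjective (P.mkQ.restrictScalars R) ((e.symm.toLinearMap ∘ₗ Q.mkQ).restrictScalars R)
    P.mkQ_surjective (e.symm.surjective.comp Q.mkQ_surjective)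

end HasInfiniteCommonQuotient

section Localization

theorem nontrivial_quotient_smul_top_of_annihilator_le {R M : Type*} [CommRing R]
    [AddCommGroup M] [Module R M] [Module.Finite R M] {m : Ideal R} [m.IsPrime]
    (h : Module.annihilator R M ≤ m) : Nontrivial (M ⧸ (m • ⊤ : Submodule R M)) := by
  rw [← Module.nonempty_support_iff (R := R), Module.support_quotient, Module.support_eq_zeroLocus]
  exact ⟨⟨m, inferInstance⟩, h, fun _ hx => hx⟩

theorem exists_surjective_quotient_of_annihilator_le {R M : Type*} [CommRing R] [AddCommGroup M]
    [Module R M] [Module.Finite R M] {m : Ideal R} [m.IsMaximal] (h : Module.annihilator R M ≤ m) :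
    ∃ f : M →ₗ[R] R ⧸ m, Function.Surjective f := by
  let _ : Field (R ⧸ m) := Ideal.Quotient.field m
  have := nontrivial_quotient_smul_top_of_annihilator_le h
  obtain ⟨w, hw⟩ := exists_ne (0 : M ⧸ (m • ⊤ : Submodule R M))
  obtain ⟨φ, hφ⟩ := not_forall.1 (mt (Module.forall_dual_apply_eq_zero_iff (R ⧸ m) w).1 hw)
  have hφ' : Function.Surjective φ :=
    LinearMap.surjective fun h => hφ (by rw [h, LinearMap.zero_apply])
  exact ⟨φ.restrictScalars R ∘ₗ (m • ⊤ : Submodule R M).mkQ,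
    hφ'.comp (Submodule.mkQ_surjective (m • ⊤ : Submodule R M))⟩

theorem exists_surjective_quotient_of_isLocalizedModule {Λ T V : Type*} [CommRing Λ]
    [AddCommGroup T] [Module Λ T] [AddCommGroup V] [Module Λ V] (s : Submonoid Λ) (f : T →ₗ[Λ] V)
    [IsLocalizedModule s f] [Module.Finite Λ T] {m : Ideal (Localization s)} [m.IsMaximal]
    (h : (Module.annihilator Λ T).map (algebraMap Λ (Localization s)) ≤ m) :
    ∃ g : V →ₗ[Λ] Localization s ⧸ m, Function.Surjective g := by
  let T' := LocalizedModule s T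
  have : Module.Finite (Localization s) T' :=
    .of_isLocalizedModule s (LocalizedModule.mkLinearMap s T)
  have hann : Module.annihilator (Localization s) T' ≤ m := fun r hr => by
    obtain ⟨⟨a, b⟩, rfl⟩ := IsLocalization.mk'_surjective s r
    have ha (t : T) : LocalizedModule.mkLinearMap s T (a • t) = 0 := by
      rw [map_smul, ← algebraMap_smul (Localization s), ← IsLocalization.mk'_spec' _ a b, mul_smul,
        Module.mem_annihilator.1 hr, smul_zero]
    obtain ⟨c, hc⟩ := Module.Finite.exists_smul_of_comp_eq_of_isLocalizedModule s
      (LocalizedModule.mkLinearMap s T) (a • LinearMap.id) 0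
      (LinearMap.ext fun t => by simpa using! ha t)
    have hca : (c : Λ) * a ∈ Module.annihilator Λ T := Module.mem_annihilator.2 fun t => by
      rw [mul_smul]
      exact LinearMap.congr_fun (hc.trans (smul_zero c)) t
    rw [IsLocalization.mk'_mem_iff, ← Ideal.unit_mul_mem_iff_mem _ (IsLocalization.map_units _ c),
      ← map_mul]
    exact h (Ideal.mem_map_of_mem _ hca)
  obtain ⟨g, hg⟩ := exists_surjective_quotient_of_annihilator_le hann
  exact ⟨g.restrictScalars Λ ∘ₗ (IsLocalizedModule.iso s f).symm.toLinearMap,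
    hg.comp (LinearEquiv.surjective _)⟩

end Localization

section DivisionTowers

variable (Λ : Type*) [CommRing Λ] (N : ℕ) (X : Type*) [AddCommGroup X] [Module Λ X]

/-- The sequences `x₀, x₁, …` in `X` with `N • xₖ₊₁ = xₖ`, that is, the limit of the tower of
multiplications by `N` on `X`. -/
def divisionTowers : Submodule Λ (ℕ → X) where
  carrier := {x | ∀ k, N • x (k + 1) = x k}
  zero_mem' := fun _ => smul_zero _
  add_mem' := fun hx hy k => by rw [Pi.add_apply, smul_add, hx k, hy k, Pi.add_apply]
  smul_mem' := fun a x hx k => by rw [Pi.smul_apply, smul_comm, hx k, Pi.smul_apply]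

/-- The projection of a division tower to its term of index `0`. -/
def divisionTowersHead : divisionTowers Λ N X →ₗ[Λ] X :=
  LinearMap.proj 0 ∘ₗ (divisionTowers Λ N X).subtype

/-- The division towers of `0`; for `N` prime this is the Tate module of `X`. -/
abbrev tateModule : Submodule Λ (divisionTowers Λ N X) :=
  LinearMap.ker (divisionTowersHead Λ N X)

variable {Λ N X}

theorem pow_smul_divisionTowers_apply (x : divisionTowers Λ N X) (k l : ℕ) :
    N ^ k • x.1 (l + k) = x.1 l := by
  induction k with
  | zero => rw [pow_zero, one_smul, add_zero]
  | succ k ih => rw [pow_succ, mul_smul, ← add_assoc, x.2, ih]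

theorem surjective_divisionTowersHead (hN : Function.Surjective fun x : X => N • x) :
    Function.Surjective (divisionTowersHead Λ N X) := fun x =>
  have ⟨y, hy⟩ := hN.hasRightInverse
  ⟨⟨fun k => y^[k] x, fun k =>
    (congrArg (N • ·) (Function.iterate_succ_apply' y k x)).trans (hy _)⟩, rfl⟩

theorem bijective_nsmul_divisionTowers :
    Function.Bijective fun x : divisionTowers Λ N X => N • x :=
  ⟨fun x y hxy => Subtype.ext <| funext fun k => by
      rw [← x.2 k, ← y.2 k]
      exact congrFun (congrArg Subtype.val hxy) (k + 1),
    fun x => ⟨⟨fun k => x.1 (k + 1), fun k => x.2 (k + 1)⟩, Subtype.ext (funext x.2)⟩⟩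

theorem exists_pow_smul_mem_tateModule (hX : IsPowTorsion N X) (x : divisionTowers Λ N X) :
    ∃ k : ℕ, N ^ k • x ∈ tateModule Λ N X :=
  have ⟨k, hk⟩ := hX (divisionTowersHead Λ N X x)
  ⟨k, by rw [LinearMap.mem_ker, map_nsmul, hk]⟩

theorem isLocalizedModule_tateModule (hX : IsPowTorsion N X) :
    IsLocalizedModule (Submonoid.powers (N : Λ)) (tateModule Λ N X).subtype where
  map_units := by
    rintro ⟨_, k, rfl⟩
    rw [map_pow]
    refine .pow k (Module.End.isUnit_iff _ |>.2 ?_)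
    convert bijective_nsmul_divisionTowers (Λ := Λ) (N := N) (X := X) using 2
    exact Nat.cast_smul_eq_nsmul Λ N _
  surj x := by
    obtain ⟨k, hk⟩ := exists_pow_smul_mem_tateModule hX x
    refine ⟨(⟨_, hk⟩, ⟨_, k, rfl⟩), ?_⟩
    change (N : Λ) ^ k • x = N ^ k • x
    rw [← Nat.cast_pow, Nat.cast_smul_eq_nsmul]
  exists_of_eq h := ⟨1, by rw [Subtype.ext h]⟩

theorem annihilator_tateModule_le (hX : IsPowTorsion N X)
    (hN : Function.Surjective fun x : X => N • x) :
    Module.annihilator Λ (tateModule Λ N X) ≤ Module.annihilator Λ X := fun a ha => by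
  refine Module.mem_annihilator.2 fun x => ?_
  obtain ⟨v, rfl⟩ := surjective_divisionTowersHead (Λ := Λ) hN x
  obtain ⟨k, hk⟩ := exists_pow_smul_mem_tateModule hX v
  have hav : a • N ^ k • v = 0 := congrArg Subtype.val (Module.mem_annihilator.1 ha ⟨_, hk⟩)
  have havk : a • N ^ k • v.1 k = 0 := congrFun (congrArg Subtype.val hav) k
  have hvk := pow_smul_divisionTowers_apply v k 0
  rw [zero_add] at hvk
  rwa [hvk] at havk

end DivisionTowers

section CommonQuotient

variable {Λ : Type*} [CommRing Λ] {N : ℕ}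

theorem IsPowTorsion.infinite {M : Type*} [AddCommGroup M] [Nontrivial M] (hM : IsPowTorsion N M)
    (hN : Function.Surjective fun x : M => N • x) : Infinite M := by
  refine not_finite_iff_infinite.1 fun _ => ?_
  obtain ⟨x, hx⟩ := exists_ne (0 : M)
  obtain ⟨k, hk⟩ := hM x
  refine hx ((Finite.injective_iff_surjective.2 hN).iterate k ?_)
  simpa only [smul_iterate, smul_zero] using hk

theorem exists_surjective_of_annihilator_tateModule_le {X : Type*} [AddCommGroup X] [Module Λ X]
    (hX : IsPowTorsion N X) [Module.Finite Λ (tateModule Λ N X)]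
    {m : Ideal (Localization (Submonoid.powers (N : Λ)))} [m.IsMaximal]
    (h : (Module.annihilator Λ (tateModule Λ N X)).map (algebraMap Λ _) ≤ m) :
    ∃ f : divisionTowers Λ N X →ₗ[Λ] Localization (Submonoid.powers (N : Λ)) ⧸ m,
      Function.Surjective f :=
  have := isLocalizedModule_tateModule (Λ := Λ) hX
  exists_surjective_quotient_of_isLocalizedModule (T := tateModule Λ N X) _
    (tateModule Λ N X).subtype h

theorem nontrivial_quotient_of_fg {M : Type*} [AddCommGroup M] [Module Λ M] [Nontrivial M] {r : Λ}
    (hr : r ∈ Ideal.jacobson ⊥) (hsurj : Function.Surjective fun x : M => r • x)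
    {P : Submodule Λ M} (hP : P.FG) : Nontrivial (M ⧸ P) := by
  refine Submodule.Quotient.nontrivial_iff.2 fun htop => bot_ne_top (α := Submodule Λ M) (.symm ?_)
  refine Submodule.eq_bot_of_le_smul_of_le_jacobson_bot (Ideal.span {r}) ⊤ (htop ▸ hP) ?_
    ((Ideal.span_singleton_le_iff_mem _).2 hr)
  rw [Submodule.ideal_span_singleton_smul]
  intro x _
  obtain ⟨y, rfl⟩ := hsurj x
  exact Submodule.smul_mem_pointwise_smul _ _ _ trivial

/-- The common quotient is `K/P`, where `P` is the image of the division towers of `0` in `E`. It is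
nonzero by Nakayama. A power of `N` kills the image in `K/P` of the division towers of `0` in `D`,
so after multiplication by this power `f` induces a map from `D` onto `K/P`. -/
theorem hasInfiniteCommonQuotient_of_divisionTowers {D E K : Type*} [AddCommGroup D] [Module Λ D]
    [AddCommGroup E] [Module Λ E] [AddCommGroup K] [Module Λ K] [Nontrivial K]
    (hD : Function.Surjective fun x : D => N • x) (hE : Function.Surjective fun x : E => N • x)
    (hE' : IsPowTorsion N E) [Module.Finite Λ (tateModule Λ N D)]
    [Module.Finite Λ (tateModule Λ N E)] (hjac : (N : Λ) ∈ Ideal.jacobson ⊥)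
    (f : divisionTowers Λ N D →ₗ[Λ] K) (g : divisionTowers Λ N E →ₗ[Λ] K)
    (hf : Function.Surjective f) (hg : Function.Surjective g) :
    HasInfiniteCommonQuotient Λ D E := by
  let P : Submodule Λ K := (tateModule Λ N E).map g
  have hK : Function.Surjective fun x : K => N • x := fun x => by
    obtain ⟨v, rfl⟩ := hg x
    obtain ⟨w, rfl⟩ := bijective_nsmul_divisionTowers.2 v
    exact ⟨g w, (map_nsmul g N w).symm⟩
  have hKP : Function.Surjective fun x : K ⧸ P => N • x := fun x => by
    obtain ⟨y, rfl⟩ := P.mkQ_surjective x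
    obtain ⟨z, rfl⟩ := hK y
    exact ⟨P.mkQ z, (map_nsmul P.mkQ N z).symm⟩
  have htors : IsPowTorsion N (K ⧸ P) := fun x => by
    obtain ⟨x, rfl⟩ := (P.mkQ_surjective.comp hg) x
    obtain ⟨k, hk⟩ := exists_pow_smul_mem_tateModule hE' x
    refine ⟨k, ?_⟩
    rw [Function.comp_apply, ← map_nsmul, ← map_nsmul]
    exact (Submodule.Quotient.mk_eq_zero P).2 (Submodule.mem_map_of_mem hk)
  have : Nontrivial (K ⧸ P) :=
    nontrivial_quotient_of_fg hjac (by simpa only [Nat.cast_smul_eq_nsmul] using hK)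
      (.map g (Module.Finite.iff_fg.1 inferInstance))
  have := htors.infinite hKP
  obtain ⟨k, hk⟩ := htors.exists_pow_smul_linearMap_eq_zero
    (P.mkQ ∘ₗ f ∘ₗ (tateModule Λ N D).subtype)
  refine .of_ker_le (surjective_divisionTowersHead hD) (surjective_divisionTowersHead hE)
    (N ^ k • (P.mkQ ∘ₗ f)) (P.mkQ ∘ₗ g) ?_ (P.mkQ_surjective.comp hg)
    (fun v hv => ?_) fun v hv => ?_
  · have := hKP.iterate k
    simp only [smul_iterate] at this
    exact this.comp (P.mkQ_surjective.comp hf)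
  · exact LinearMap.congr_fun hk ⟨v, hv⟩
  · exact (Submodule.Quotient.mk_eq_zero P).2 (Submodule.mem_map_of_mem hv)

theorem exists_pow_mem_annihilator_sup {D E : Type*} [AddCommGroup D] [Module Λ D]
    [AddCommGroup E] [Module Λ E] (hD : IsPowTorsion N D) (hE : IsPowTorsion N E)
    (hDN : Function.Surjective fun x : D => N • x) (hEN : Function.Surjective fun x : E => N • x)
    [Module.Finite Λ (tateModule Λ N D)] [Module.Finite Λ (tateModule Λ N E)]
    (hjac : (N : Λ) ∈ Ideal.jacobson ⊥) (hquot : ¬ HasInfiniteCommonQuotient Λ D E) :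
    ∃ m : ℕ, (N : Λ) ^ m ∈ Module.annihilator Λ D ⊔ Module.annihilator Λ E := by
  let s := Submonoid.powers (N : Λ)
  let I := Module.annihilator Λ (tateModule Λ N D) ⊔ Module.annihilator Λ (tateModule Λ N E)
  suffices h : I.map (algebraMap Λ (Localization s)) = ⊤ by
    rw [← not_ne_iff, IsLocalization.map_algebraMap_ne_top_iff_disjoint s,
      Set.not_disjoint_iff] at h
    obtain ⟨_, ⟨m, rfl⟩, hm⟩ := h
    exact ⟨m, (show I ≤ _ from sup_le_sup (annihilator_tateModule_le hD hDN)
      (annihilator_tateModule_le hE hEN)) hm⟩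
  by_contra hI
  obtain ⟨m, _, hIm⟩ := Ideal.exists_le_maximal _ hI
  rw [Ideal.map_sup, sup_le_iff] at hIm
  have : Nontrivial (Localization s ⧸ m) :=
    Ideal.Quotient.nontrivial_iff.2 (Ideal.IsMaximal.ne_top ‹_›)
  obtain ⟨f, hf⟩ := exists_surjective_of_annihilator_tateModule_le hD hIm.1
  obtain ⟨g, hg⟩ := exists_surjective_of_annihilator_tateModule_le hE hIm.2
  exact hquot (hasInfiniteCommonQuotient_of_divisionTowers hDN hEN hE hjac f g hf hg)

end CommonQuotient

section FiniteTateModule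

theorem isPrecomplete_of_moduleFinite {R M : Type*} [CommRing R] [AddCommGroup M] [Module R M]
    (I : Ideal R) [IsPrecomplete I R] [Module.Finite R M] : IsPrecomplete I M := by
  refine AdicCompletion.of_surjective_iff.1 fun x => ?_
  obtain ⟨t, rfl⟩ := AdicCompletion.ofTensorProduct_surjective_of_finite I M x
  induction t with
  | zero => exact ⟨0, by rw [map_zero, map_zero]⟩
  | add s t hs ht =>
    obtain ⟨a, ha⟩ := hs
    obtain ⟨b, hb⟩ := ht
    exact ⟨a + b, by rw [map_add, map_add, ha, hb]⟩
  | tmul a m =>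
    obtain ⟨r, rfl⟩ := AdicCompletion.of_surjective I R a
    refine ⟨r • m, ?_⟩
    rw [AdicCompletion.ofTensorProduct_tmul, map_smul]
    ext n
    rfl

theorem moduleFinite_of_finite_quotient {R M : Type*} [CommRing R] [AddCommGroup M] [Module R M]
    (I : Ideal R) [IsPrecomplete I R] [IsHausdorff I M]
    [Module.Finite R (M ⧸ (I • ⊤ : Submodule R M))] : Module.Finite R M := by
  obtain ⟨n, g, hg⟩ := Module.Finite.exists_fin' R (M ⧸ (I • ⊤ : Submodule R M))
  obtain ⟨f, rfl⟩ := Module.projective_lifting_property _ g (Submodule.mkQ_surjective _)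
  have := isPrecomplete_of_moduleFinite (M := Fin n → R) I
  exact .of_surjective f (surjective_of_mkQ_comp_surjective (I := I) hg)

theorem moduleFinite_of_isPrecomplete_span_natCast {Λ T Y : Type*} [CommRing Λ] [AddCommGroup T]
    [Module Λ T] [Finite Y] {N : ℕ} [IsPrecomplete (Ideal.span {(N : Λ)}) Λ]
    (hT : ∀ x : T, (∀ k, ∃ y : T, N ^ k • y = x) → x = 0) (f : T → Y)
    (hf : ∀ x y, f x = f y → ∃ z, N • z = x - y) : Module.Finite Λ T := by
  let I : Ideal Λ := Ideal.span {(N : Λ)}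
  have mem_iff (k : ℕ) (x : T) : x ∈ (I ^ k • ⊤ : Submodule Λ T) ↔ ∃ y, N ^ k • y = x := by
    rw [Ideal.span_singleton_pow, Submodule.ideal_span_singleton_smul, ← Nat.cast_pow]
    simp only [Submodule.mem_smul_pointwise_iff_exists, Submodule.mem_top, true_and,
      Nat.cast_smul_eq_nsmul]
  have : IsHausdorff I T := ⟨fun x hx => hT x fun k => (mem_iff k x).1 (SModEq.zero.1 (hx k))⟩
  have : Finite (T ⧸ (I • ⊤ : Submodule Λ T)) := by
    refine .of_surjective (fun y : Set.range f => Submodule.Quotient.mk y.2.choose) fun q => ?_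
    obtain ⟨x, rfl⟩ := Submodule.Quotient.mk_surjective _ q
    refine ⟨⟨f x, x, rfl⟩, (Submodule.Quotient.eq _).2 ?_⟩
    obtain ⟨z, hz⟩ := hf _ _ (show f x ∈ Set.range f from ⟨x, rfl⟩).choose_spec
    rw [← pow_one I, mem_iff]
    exact ⟨z, by rwa [pow_one]⟩
  exact moduleFinite_of_finite_quotient I

theorem moduleFinite_tateModule {Λ X : Type*} [CommRing Λ] [AddCommGroup X] [Module Λ X] {N : ℕ}
    [IsPrecomplete (Ideal.span {(N : Λ)}) Λ] (hX : {x : X | N • x = 0}.Finite) :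
    Module.Finite Λ (tateModule Λ N X) := by
  have : Finite {x : X | N • x = 0} := hX
  refine moduleFinite_of_isPrecomplete_span_natCast (N := N) (fun x hx => ?_)
    (fun x : tateModule Λ N X => (⟨x.1.1 1, (x.1.2 0).trans x.2⟩ : {x : X | N • x = 0}))
    fun x y hxy => ?_
  · ext k
    obtain ⟨y, rfl⟩ := hx k
    have hy := pow_smul_divisionTowers_apply y.1 k 0
    rw [zero_add] at hy
    exact hy.trans y.2
  · have h₁ : (x - y).1.1 1 = 0 := sub_eq_zero.2 (congrArg Subtype.val hxy)
    refine ⟨⟨⟨fun k => (x - y).1.1 (k + 1), fun k => (x - y).1.2 (k + 1)⟩, h₁⟩, ?_⟩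
    ext k
    exact (x - y).1.2 k

end FiniteTateModule

/-! ### The action of the adic completion -/

section AdicAction

universe u

open AdicCompletion (evalₐ evalₐ_mk)

theorem evalₐ_eq_mk_of_le {R : Type*} [CommRing R] {I : Ideal R} {a : AdicCompletion I R} {j k : ℕ}
    (hjk : j ≤ k) {r : R} (hr : evalₐ I k a = Ideal.Quotient.mk (I ^ k) r) :
    evalₐ I j a = Ideal.Quotient.mk (I ^ j) r := by
  induction a using AdicCompletion.induction_on with | _ s =>
  rw [evalₐ_mk, Ideal.Quotient.eq] at hr
  rw [evalₐ_mk, ← AdicCompletion.Ideal.mk_eq_mk I hjk, Ideal.Quotient.eq]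
  exact Ideal.pow_le_pow_right hjk hr

theorem smul_eq_zero_of_mem_span_natCast_pow {R X : Type*} [CommRing R] [AddCommGroup X]
    [Module R X] {N k : ℕ} {x : X} (hx : N ^ k • x = 0) {r : R}
    (hr : r ∈ Ideal.span {(N : R)} ^ k) : r • x = 0 := by
  rw [Ideal.span_singleton_pow, Ideal.mem_span_singleton'] at hr
  obtain ⟨s, rfl⟩ := hr
  rw [mul_smul, ← Nat.cast_pow, Nat.cast_smul_eq_nsmul, hx, smul_zero]

variable {R : Type*} [CommRing R] {N : ℕ} {X : Type*} [AddCommGroup X] [Module R X]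

theorem smul_eq_smul_of_evalₐ_eq {a : AdicCompletion (Ideal.span {(N : R)}) R} {x : X} {j k : ℕ}
    {r s : R} (hj : N ^ j • x = 0) (hk : N ^ k • x = 0)
    (hr : evalₐ _ j a = Ideal.Quotient.mk _ r) (hs : evalₐ _ k a = Ideal.Quotient.mk _ s) :
    r • x = s • x := by
  wlog hjk : j ≤ k generalizing j k r s
  · exact (this hk hj hs hr (Nat.le_of_not_le hjk)).symm
  rw [evalₐ_eq_mk_of_le hjk hs, eq_comm, Ideal.Quotient.eq] at hr
  rw [← sub_eq_zero, ← sub_smul]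
  exact smul_eq_zero_of_mem_span_natCast_pow hj hr

theorem IsPowTorsion.exists_pow_smul_eq_zero_and_evalₐ_eq {X : Type*} [AddCommGroup X]
    (hX : IsPowTorsion N X)
    (a : AdicCompletion (Ideal.span {(N : R)}) R) (x : X) :
    ∃ (r : R) (k : ℕ), N ^ k • x = 0 ∧ evalₐ _ k a = Ideal.Quotient.mk _ r :=
  have ⟨k, hk⟩ := hX x
  have ⟨r, hr⟩ := Ideal.Quotient.mk_surjective (evalₐ _ k a)
  ⟨r, k, hk, hr.symm⟩

/-- The action of an element `a` of the `N`-adic completion of `R` on an `N`-power-torsion module: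
if `N ^ k • x = 0`, then `a` acts on `x` as any `r : R` congruent to `a` modulo `N ^ k`. -/
def adicSMul (hX : IsPowTorsion N X) (a : AdicCompletion (Ideal.span {(N : R)}) R) (x : X) : X :=
  (hX.exists_pow_smul_eq_zero_and_evalₐ_eq a x).choose • x

theorem adicSMul_eq (hX : IsPowTorsion N X) {a : AdicCompletion (Ideal.span {(N : R)}) R} {x : X}
    {k : ℕ} (hk : N ^ k • x = 0) {r : R} (hr : evalₐ _ k a = Ideal.Quotient.mk _ r) :
    adicSMul hX a x = r • x :=
  have ⟨_, hj, hs⟩ := (hX.exists_pow_smul_eq_zero_and_evalₐ_eq a x).choose_spec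
  smul_eq_smul_of_evalₐ_eq hj hk hs hr

/-- The action of the `N`-adic completion on an `N`-power-torsion module. It is a ring homomorphism
rather than an instance because it depends on the proof of torsion. -/
def adicAction (hX : IsPowTorsion N X) :
    AdicCompletion (Ideal.span {(N : R)}) R →+* Module.End R X where
  toFun a :=
    { toFun := adicSMul hX a
      map_add' := fun x y => by
        obtain ⟨k, hk⟩ := hX.exists_forall_pow_smul_eq_zero ![x, y]
        obtain ⟨r, hr⟩ := Ideal.Quotient.mk_surjective (evalₐ _ k a)
        have hx : N ^ k • x = 0 := hk 0
        have hy : N ^ k • y = 0 := hk 1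
        rw [adicSMul_eq hX hx hr.symm, adicSMul_eq hX hy hr.symm,
          adicSMul_eq hX (by rw [smul_add, hx, hy, add_zero]) hr.symm, smul_add]
      map_smul' := fun s x => by
        obtain ⟨r, k, hk, hr⟩ := hX.exists_pow_smul_eq_zero_and_evalₐ_eq a x
        rw [adicSMul_eq hX hk hr, adicSMul_eq hX (by rw [smul_comm, hk, smul_zero]) hr,
          smul_comm, RingHom.id_apply] }
  map_one' := LinearMap.ext fun x =>
    have ⟨_, hk⟩ := hX x
    (adicSMul_eq hX hk (r := 1) (by rw [map_one, map_one])).trans (one_smul R x)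
  map_zero' := LinearMap.ext fun x =>
    have ⟨_, hk⟩ := hX x
    (adicSMul_eq hX hk (r := 0) (by rw [map_zero, map_zero])).trans (zero_smul R x)
  map_mul' a b := LinearMap.ext fun x => by
    obtain ⟨k, hk⟩ := hX x
    obtain ⟨r, hr⟩ := Ideal.Quotient.mk_surjective (evalₐ _ k a)
    obtain ⟨s, hs⟩ := Ideal.Quotient.mk_surjective (evalₐ _ k b)
    change adicSMul hX (a * b) x = adicSMul hX a (adicSMul hX b x)
    rw [adicSMul_eq hX hk hs.symm, adicSMul_eq hX (by rw [smul_comm, hk, smul_zero]) hr.symm,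
      adicSMul_eq hX hk (r := r * s) (by rw [map_mul, map_mul, hr, hs]), mul_smul]
  map_add' a b := LinearMap.ext fun x => by
    obtain ⟨k, hk⟩ := hX x
    obtain ⟨r, hr⟩ := Ideal.Quotient.mk_surjective (evalₐ _ k a)
    obtain ⟨s, hs⟩ := Ideal.Quotient.mk_surjective (evalₐ _ k b)
    change adicSMul hX (a + b) x = adicSMul hX a x + adicSMul hX b x
    rw [adicSMul_eq hX hk hr.symm, adicSMul_eq hX hk hs.symm,
      adicSMul_eq hX hk (r := r + s) (by rw [map_add, map_add, hr, hs]), add_smul]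

theorem adicAction_algebraMap_apply (hX : IsPowTorsion N X) (r : R) (x : X) :
    adicAction hX (algebraMap R (AdicCompletion _ R) r) x = r • x :=
  have ⟨_, hk⟩ := hX x
  adicSMul_eq hX hk (AlgHom.commutes _ r)

theorem map_adicAction_apply {Y : Type*} [AddCommGroup Y] [Module R Y] (hX : IsPowTorsion N X)
    (hY : IsPowTorsion N Y) (f : X →ₗ[R] Y) (a : AdicCompletion (Ideal.span {(N : R)}) R) (x : X) :
    f (adicAction hX a x) = adicAction hY a (f x) := by
  obtain ⟨r, k, hk, hr⟩ := hX.exists_pow_smul_eq_zero_and_evalₐ_eq a x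
  refine (congrArg f (adicSMul_eq hX hk hr)).trans ((map_smul f r x).trans (.symm ?_))
  exact adicSMul_eq hY (by rw [← map_nsmul, hk, map_zero]) hr

/-- Multiplication by an element of the `N`-adic completion of `R`, as an endomorphism of the
inclusion of the `N`-power-torsion modules into all modules. -/
def adicActionNatTrans {R : Type u} [CommRing R] {N : ℕ}
    (a : AdicCompletion (Ideal.span {(N : R)}) R) :
    (powTorsionModules R N).ι ⟶ (powTorsionModules R N).ι where
  app X := ModuleCat.ofHom (adicAction X.property a)
  naturality X Y f := by
    ext x
    exact (map_adicAction_apply X.property Y.property f.hom.hom a x).symm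

end AdicAction

section ExtBounded

universe u

theorem isAdicComplete_adicCompletion_span_natCast (R : Type*) [CommRing R] (N : ℕ) :
    IsAdicComplete (Ideal.span {(N : AdicCompletion (Ideal.span {(N : R)}) R)})
      (AdicCompletion (Ideal.span {(N : R)}) R) := by
  have h := AdicCompletion.isAdicComplete_self _ (Submodule.fg_span_singleton (R := R) (N : R))
  rwa [Ideal.submodule_span_eq, Ideal.map_span, Set.image_singleton, map_natCast] at h

theorem exists_adicAction_eq_zero_and_eq_pow_smul {R : Type*} [CommRing R] {N : ℕ} (hN : N ≠ 0)
    {D E : Type*} [AddCommGroup D] [Module R D] [AddCommGroup E] [Module R E]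
    (hD : IsArtinianPowTorsion N D) (hE : IsArtinianPowTorsion N E)
    (hDN : Function.Surjective fun x : D => N • x) (hEN : Function.Surjective fun x : E => N • x)
    (hquot : ¬ HasInfiniteCommonQuotient R D E) :
    ∃ (m : ℕ) (a : AdicCompletion (Ideal.span {(N : R)}) R),
      adicAction hD.isPowTorsion a = 0 ∧ adicAction hE.isPowTorsion a = N ^ m • 1 := by
  let Λ := AdicCompletion (Ideal.span {(N : R)}) R
  let _ : Module Λ D := Module.compHom D (adicAction (R := R) hD.isPowTorsion)
  let _ : Module Λ E := Module.compHom E (adicAction (R := R) hE.isPowTorsion)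
  have : IsScalarTower R Λ D := .of_algebraMap_smul (adicAction_algebraMap_apply hD.isPowTorsion)
  have : IsScalarTower R Λ E := .of_algebraMap_smul (adicAction_algebraMap_apply hE.isPowTorsion)
  have : IsAdicComplete (Ideal.span {(N : Λ)}) Λ := isAdicComplete_adicCompletion_span_natCast R N
  have hDfin := hD.isArtinian
  have hEfin := hE.isArtinian
  have : Module.Finite Λ (tateModule Λ N D) :=
    moduleFinite_tateModule (finite_torsion_of_isArtinian hN)
  have : Module.Finite Λ (tateModule Λ N E) :=
    moduleFinite_tateModule (finite_torsion_of_isArtinian hN)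
  have hjac : (N : Λ) ∈ Ideal.jacobson ⊥ :=
    IsAdicComplete.le_jacobson_bot _ (Ideal.mem_span_singleton_self _)
  obtain ⟨m, hm⟩ := exists_pow_mem_annihilator_sup hD.isPowTorsion hE.isPowTorsion hDN hEN hjac
    fun h => hquot h.restrictScalars
  obtain ⟨a, ha, b, hb, hab⟩ := Submodule.mem_sup.1 hm
  refine ⟨m, a, LinearMap.ext (Module.mem_annihilator.1 ha), ?_⟩
  have hb : adicAction hE.isPowTorsion b = 0 := LinearMap.ext (Module.mem_annihilator.1 hb)
  rw [← add_zero (adicAction _ a), ← hb, ← map_add, hab, map_pow, map_natCast, nsmul_one,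
    Nat.cast_pow]

theorem exists_forall_pow_smul_ext_eq_zero {R : Type u} [CommRing R] [IsNoetherianRing R] {N : ℕ}
    (hN : N ≠ 0) {D E : ModuleCat.{u} R} (hD : IsArtinianPowTorsion N D)
    (hE : IsArtinianPowTorsion N E) (hDN : Function.Surjective fun x : D => N • x)
    (hEN : Function.Surjective fun x : E => N • x) (hquot : ¬ HasInfiniteCommonQuotient R D E) :
    ∃ m : ℕ, ∀ (n : ℕ) (e : Abelian.Ext D E n), N ^ m • e = 0 := by
  obtain ⟨m, a, haD, haE⟩ := exists_adicAction_eq_zero_and_eq_pow_smul hN hD hE hDN hEN hquot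
  refine ⟨m, fun n e => ?_⟩
  let τ := adicActionNatTrans a
  have hτD : τ.app ⟨D, hD.isPowTorsion⟩ = 0 := congrArg ModuleCat.ofHom haD
  have hτE : τ.app ⟨E, hE.isPowTorsion⟩ = N ^ m • 𝟙 E := congrArg ModuleCat.ofHom haE
  have h := (hasInjectiveEmbeddings_powTorsionModules N).mk₀_app_comp_eq_comp_mk₀_app τ
    (X := D) hD.isPowTorsion n hE.isPowTorsion e
  rw [hτD, hτE, Abelian.Ext.mk₀_zero, Abelian.Ext.zero_comp] at h
  rw [nsmul_eq_comp_mk₀, ← h]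

end ExtBounded

/-! ### Abelian groups of finite rank -/

section FiniteRank

variable {A : Type*} [AddCommGroup A]

theorem FiniteRankAbelian.finite_torsion (hA : FiniteRankAbelian A) {n : ℕ} (hn : n ≠ 0) :
    {a : A | n • a = 0}.Finite := by
  induction n using induction_on_primes with
  | zero => exact absurd rfl hn
  | one => simp
  | prime_mul p n hp ih =>
    have hfin : {a : A | p • a = 0}.Finite := hA.2 p hp
    refine ((ih (right_ne_zero_of_mul hn)).preimage' (f := fun a => p • a) fun b _ => ?_).subset
      fun a ha => show n • p • a = 0 by rw [← mul_smul, mul_comm]; exact ha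
    rcases Set.eq_empty_or_nonempty ((fun a : A => p • a) ⁻¹' {b}) with h | ⟨a, rfl⟩
    · exact h ▸ Set.finite_empty
    · refine (hfin.image (a + ·)).subset fun x (hx : p • x = p • a) => ⟨x - a, ?_, by simp⟩
      rw [Set.mem_ofPred_eq, smul_sub, hx, sub_self]

theorem FiniteRankAbelian.exists_smul_mem_span (hA : FiniteRankAbelian A) :
    ∃ (k : ℕ) (v : Fin k → A), ∀ a : A, ∃ n : ℕ, n ≠ 0 ∧
      n • a ∈ Submodule.span ℤ (Set.range v) := by
  obtain ⟨b, hb⟩ := hA.1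
  have hbound : BddAbove {k | ∃ v : Fin k → A, LinearIndependent ℤ v} :=
    ⟨b, fun k ⟨v, hv⟩ => hb k ⟨(Finsupp.linearCombination ℤ v).toAddMonoidHom, hv⟩⟩
  have hne : {k | ∃ v : Fin k → A, LinearIndependent ℤ v}.Nonempty :=
    ⟨0, Fin.elim0, linearIndependent_empty_type⟩
  obtain ⟨v, hv⟩ := Nat.sSup_mem hne hbound
  refine ⟨_, v, fun a => by_contra fun h => ?_⟩
  push Not at h
  have hcons : LinearIndependent ℤ (Fin.cons a v : Fin (_ + 1) → A) := by
    refine hv.finCons' a v fun c y hy hcy => by_contra fun hc => ?_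
    refine h c.natAbs (Int.natAbs_ne_zero.2 hc) ?_
    have hca : c • a ∈ Submodule.span ℤ (Set.range v) := by
      rw [eq_neg_of_add_eq_zero_left hcy]
      exact neg_mem hy
    rw [← natCast_zsmul]
    rcases abs_choice c with hc' | hc' <;> simpa [hc'] using hca
  exact (Nat.lt_succ_self _).not_ge (le_csSup hbound ⟨_, hcons⟩)

theorem finite_torsion_quotient {N : ℕ} (hN : N ≠ 0) (hA : {a : A | N • a = 0}.Finite)
    {F : Submodule ℤ A} (hF : F.FG) : {u : A ⧸ F | N • u = 0}.Finite := by
  let f : A →ₗ[ℤ] A := (nsmulAddMonoidHom N).toIntLinearMap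
  have hcomap : (F.comap f).FG := by
    refine Submodule.fg_of_fg_map_of_fg_inf_ker f (hF.of_le (Submodule.map_comap_le f F)) ?_
    have : Finite ↥(F.comap f ⊓ LinearMap.ker f) := hA.subset fun a ha => ha.2
    exact Submodule.FG.of_finite
  let T := (F.comap f).map F.mkQ
  have hT : ∀ u : T, N • u = 0 := by
    rintro ⟨_, a, ha, rfl⟩
    exact Subtype.ext ((Submodule.Quotient.mk_eq_zero F).2 ha)
  have : Module.Finite ℤ T := .of_fg (hcomap.map _)
  have : Finite T := Module.finite_of_fg_torsion T fun u =>
    ⟨⟨N, mem_nonZeroDivisors_of_ne_zero (Nat.cast_ne_zero.2 hN)⟩, by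
      rw [Submonoid.mk_smul, natCast_zsmul, hT]⟩
  refine (Set.toFinite (T : Set (A ⧸ F))).subset fun u hu => ?_
  obtain ⟨a, rfl⟩ := F.mkQ_surjective u
  exact ⟨a, (Submodule.Quotient.mk_eq_zero F).1 hu, rfl⟩

theorem finite_torsion_quotient_coprimeSaturation {R : Type*} [CommRing R] [Module R A] {N : ℕ}
    {P : Submodule R A} (hP : {u : A ⧸ P | N • u = 0}.Finite) :
    {u : A ⧸ coprimeSaturation N P | N • u = 0}.Finite := by
  refine (hP.image (P.factor (le_coprimeSaturation N P))).subset fun u hu => ?_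
  obtain ⟨a, rfl⟩ := Submodule.mkQ_surjective _ u
  obtain ⟨m, hm, hma⟩ := (Submodule.Quotient.mk_eq_zero _).1 hu
  obtain ⟨s, t, hst⟩ := Nat.isCoprime_iff_coprime.2 hm
  refine ⟨P.mkQ (s • m • a), ?_, ?_⟩
  · refine (Submodule.Quotient.mk_eq_zero P).2 ?_
    change N • s • m • a ∈ P
    rw [smul_comm, smul_comm N m]
    exact zsmul_mem hma s
  · have ha : a = s • m • a + t • N • a := by
      rw [← natCast_zsmul a m, ← natCast_zsmul a N, ← mul_smul, ← mul_smul, ← add_smul, hst,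
        one_smul]
    have hsub : s • m • a - a = -(t • N • a) := by
      nth_rw 2 [ha]
      abel
    refine (Submodule.Quotient.eq _).2 ?_
    have hNa : N • a ∈ coprimeSaturation N P := ⟨m, hm, hma⟩
    rw [LinearMap.id_apply, hsub]
    exact neg_mem (zsmul_mem hNa t)

theorem FiniteRankAbelian.isArtinianPowTorsion_quotient (hA : FiniteRankAbelian A) {N k : ℕ}
    (hN : N ≠ 0) {v : Fin k → A}
    (hv : ∀ a : A, ∃ n : ℕ, n ≠ 0 ∧ n • a ∈ Submodule.span ℤ (Set.range v))
    {R : Type*} [CommRing R] [Module R A] :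
    IsArtinianPowTorsion N (A ⧸ coprimeSaturation N (Submodule.span R (Set.range v))) := by
  let F := coprimeSaturation N (Submodule.span ℤ (Set.range v))
  have hpow : IsPowTorsion N (A ⧸ F) := fun u => by
    obtain ⟨a, rfl⟩ := F.mkQ_surjective u
    obtain ⟨n, hn, hna⟩ := hv a
    exact (exists_pow_smul_mem_coprimeSaturation N hn hna).imp fun j hj =>
      (Submodule.Quotient.mk_eq_zero F).2 hj
  have hF : IsArtinianPowTorsion N (A ⧸ F) :=
    ⟨hpow.isArtinian (finite_torsion_quotient_coprimeSaturation
      (finite_torsion_quotient hN (hA.finite_torsion hN) (Submodule.fg_span (Set.finite_range v)))),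
      hpow⟩
  let G := coprimeSaturation N (Submodule.span R (Set.range v))
  have hle : F ≤ G.restrictScalars ℤ := fun a ⟨m, hm, ha⟩ =>
    ⟨m, hm, Submodule.span_le_restrictScalars ℤ R _ ha⟩
  let q : A ⧸ F →ₗ[ℤ] A ⧸ G := F.liftQ (G.mkQ.restrictScalars ℤ) fun a ha =>
    (Submodule.Quotient.mk_eq_zero G).2 (hle ha)
  exact hF.of_surjective q.toAddMonoidHom fun x => (G.mkQ_surjective x).imp' F.mkQ fun _ ha => ha

end FiniteRank

/-! ### Extensions of a group of finite rank by a Černikov group -/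

section ExtFiniteRank

open Abelian

universe u

variable {R : Type u} [CommRing R] {N : ℕ}

theorem shortExact_subtype_mkQ {M : ModuleCat.{u} R} (P : Submodule R M) :
    (ModuleCat.shortComplexOfCompEqZero P.subtype P.mkQ (by ext; simp)).ShortExact :=
  ModuleCat.shortComplex_shortExact _ (LinearMap.exact_subtype_mkQ P) P.injective_subtype
    P.mkQ_surjective

theorem IsArtinianPowTorsion.ext_of_submodule_left {A B : ModuleCat.{u} R} (P : Submodule R A)
    (n : ℕ) (hquot : IsArtinianPowTorsion N (Ext (ModuleCat.of R (A ⧸ P)) B n))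
    (hsub : IsArtinianPowTorsion N (Ext (ModuleCat.of R P) B n)) :
    IsArtinianPowTorsion N (Ext A B n) :=
  .ext_of_shortExact_left (shortExact_subtype_mkQ P) B n hquot hsub

theorem IsArtinianPowTorsion.ext_of_submodule_right {A B : ModuleCat.{u} R} (Q : Submodule R B)
    (n : ℕ) (hsub : IsArtinianPowTorsion N (Ext A (ModuleCat.of R Q) n))
    (hquot : IsArtinianPowTorsion N (Ext A (ModuleCat.of R (B ⧸ Q)) n)) :
    IsArtinianPowTorsion N (Ext A B n) :=
  .ext_of_shortExact_right (shortExact_subtype_mkQ Q) A n hsub hquot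

variable [IsNoetherianRing R]

/-- As `N ^ m` kills the group, restriction embeds it into `Ext (D[N ^ m]) Y n`, where `D[N ^ m]` is
finite. -/
theorem IsArtinianPowTorsion.ext_of_pow_smul_eq_zero (hN : N ≠ 0) {D Y : ModuleCat.{u} R}
    [IsArtinian ℤ D] (hY : IsArtinianPowTorsion N Y) (hDN : Function.Surjective fun x : D => N • x)
    {m n : ℕ} (h : ∀ e : Ext D Y n, N ^ m • e = 0) : IsArtinianPowTorsion N (Ext D Y n) := by
  let f : D →ₗ[R] D := N ^ m • LinearMap.id
  have hf : Function.Surjective f := by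
    have hpow : (f : D → D) = (fun x : D => N • x)^[m] := by
      rw [smul_iterate]
      rfl
    exact hpow ▸ hDN.iterate m
  have hS := LinearMap.shortExact_shortComplexKer hf
  have : Finite (LinearMap.ker f) :=
    (finite_torsion_of_isArtinian (M := D) (pow_ne_zero m hN)).to_subtype
  refine (hY.ext_of_finite n (ModuleCat.of R (LinearMap.ker f))).of_injective
    ((Ext.mk₀ f.shortComplexKer.f).precomp Y (zero_add n)) ((injective_iff_map_eq_zero _).2 ?_)
  intro e he
  obtain ⟨e', rfl⟩ := Ext.contravariant_sequence_exact₂ hS Y e he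
  rw [← h e', nsmul_eq_mk₀_comp]
  rfl

theorem IsArtinianPowTorsion.ext (hN : N ≠ 0) {T B : ModuleCat.{u} R}
    (hT : IsArtinianPowTorsion N T) (hB : IsArtinianPowTorsion N B)
    (hquot : ¬ HasInfiniteCommonQuotient R T B) (n : ℕ) : IsArtinianPowTorsion N (Ext T B n) := by
  have := hT.isArtinian
  have := hB.isArtinian
  obtain ⟨D, f, hf, hDN, _⟩ := exists_divisible_submodule_of_isArtinian (M := T) R hN
  obtain ⟨E, g, hg, hEN, _⟩ := exists_divisible_submodule_of_isArtinian (M := B) R hN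
  have hD : IsArtinianPowTorsion N D := hT.of_surjective f.toAddMonoidHom hf
  have hE : IsArtinianPowTorsion N E := hB.of_surjective g.toAddMonoidHom hg
  have hBE : IsArtinianPowTorsion N (B ⧸ E) :=
    hB.of_surjective E.mkQ.toAddMonoidHom E.mkQ_surjective
  have := hD.isArtinian
  obtain ⟨k, hk⟩ := hBE.isPowTorsion.exists_forall_pow_smul_eq_zero id
  obtain ⟨m, hm⟩ := exists_forall_pow_smul_ext_eq_zero hN (D := ModuleCat.of R D)
    (E := ModuleCat.of R E) hD hE hDN hEN fun h => hquot (h.of_quotients f g hf hg)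
  have hkill (e : Ext (ModuleCat.of R D) (ModuleCat.of R (B ⧸ E)) n) : N ^ k • e = 0 := by
    have hzero : N ^ k • 𝟙 (ModuleCat.of R (B ⧸ E)) = 0 :=
      ModuleCat.hom_ext (LinearMap.ext hk)
    rw [nsmul_eq_comp_mk₀, hzero, Ext.mk₀_zero, Ext.comp_zero]
  exact .ext_of_submodule_left D n (hB.ext_of_finite n _) <|
    .ext_of_submodule_right E n (.ext_of_pow_smul_eq_zero hN hE hDN (hm n))
      (.ext_of_pow_smul_eq_zero hN hBE hDN hkill)

/-- Filter `A` by the submodule `A₀` spanned by a maximal independent family and the elements `A₁`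
whose multiple by some number coprime to `N` lies in `A₀`. -/
theorem FiniteRankAbelian.isArtinianPowTorsion_ext (hN : N ≠ 0) {A B : ModuleCat.{u} R}
    (hA : FiniteRankAbelian A) (hB : IsArtinianPowTorsion N B)
    (hquot : ¬ HasInfiniteCommonQuotient R A B) (n : ℕ) : IsArtinianPowTorsion N (Ext A B n) := by
  obtain ⟨k, v, hv⟩ := hA.exists_smul_mem_span
  let A₀ := Submodule.span R (Set.range v)
  let A₁ := coprimeSaturation N A₀
  let P := A₀.submoduleOf A₁
  have : Module.Finite R A₀ := .of_fg (Submodule.fg_span (Set.finite_range v))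
  have : Module.Finite R P :=
    .equiv (Submodule.submoduleOfEquivOfLe (le_coprimeSaturation N A₀)).symm
  have hsub : Subsingleton (Ext (ModuleCat.of R (A₁ ⧸ P)) B n) := by
    refine subsingleton_ext_of_coprime_torsion (fun t => ?_) hB.isPowTorsion n
    obtain ⟨⟨a, m, hm, hma⟩, rfl⟩ := P.mkQ_surjective t
    exact ⟨m, hm, (Submodule.Quotient.mk_eq_zero P).2 hma⟩
  refine .ext_of_submodule_left A₁ n ?_
    (.ext_of_submodule_left (A := ModuleCat.of R A₁) P n .of_subsingleton (hB.ext_of_finite n _))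
  exact .ext hN (hA.isArtinianPowTorsion_quotient hN hv) hB
    (fun h => hquot (h.of_quotients A₁.mkQ LinearMap.id A₁.mkQ_surjective Function.surjective_id)) n

end ExtFiniteRank

/-! ### Transfer to representations -/

section DerivedExt

open CochainComplex.HomComplex

universe w v u

variable {C : Type u} [Category.{v} C] [Abelian C] [HasExt.{w} C] {X : C}

theorem extMk_zero_eq_zero_iff (P : ProjectiveResolution X) {Y : C} (f : P.complex.X 0 ⟶ Y)
    (hf : P.complex.d 1 0 ≫ f = 0) : P.extMk f 1 rfl hf = 0 ↔ f = 0 := by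
  simp only [← P.extEquivCohomologyClass.apply_eq_iff_eq,
    ProjectiveResolution.extEquivCohomologyClass_extMk,
    ProjectiveResolution.extEquivCohomologyClass_zero, CohomologyClass.mk_eq_zero_iff]
  rw [Cocycle.toSingleMk_mem_coboundaries_iff _ _ _ _ _ 1 (by simp)]
  constructor
  · rintro ⟨g, hg⟩
    have hzero : Limits.IsZero (P.cochainComplex.X 1) :=
      CochainComplex.isZero_of_isStrictlyLE _ 0 1 (by lia)
    rw [hzero.eq_of_src g 0, Limits.comp_zero] at hg
    rw [← cancel_epi (P.cochainComplexXIso (-(0 : ℕ)) 0 rfl).hom, ← hg, Limits.comp_zero]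
  · rintro rfl
    exact ⟨0, by simp⟩

theorem extMk_eq_zero_iff_exists_prev (P : ProjectiveResolution X) {Y : C} {n : ℕ}
    (f : P.complex.X n ⟶ Y) (hf : P.complex.d (n + 1) n ≫ f = 0) :
    P.extMk f (n + 1) rfl hf = 0 ↔
      ∃ g : P.complex.X ((ComplexShape.up ℕ).prev n) ⟶ Y, P.complex.d n _ ≫ g = f := by
  rcases n with _ | n
  · have hd : P.complex.d 0 ((ComplexShape.up ℕ).prev 0) = 0 := P.complex.shape _ _ (by simp)
    refine (extMk_zero_eq_zero_iff P f hf).trans ?_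
    simp only [hd, Limits.zero_comp, exists_const]
    exact eq_comm
  · exact P.extMk_eq_zero_iff _ _ _ _ _ (by simp)

theorem exists_injective_derivedExt_to_ext (k : Type*) [Ring k] [Linear k C] [EnoughProjectives C]
    (X Y : C) (n : ℕ) :
    ∃ φ : ((_root_.Ext k C n).obj (Opposite.op X)).obj Y →+ Abelian.Ext.{w} X Y n,
      Function.Injective φ := by
  let P := projectiveResolution X
  let K := P.complex.linearYonedaObj k Y
  let S := K.sc' ((ComplexShape.up ℕ).prev n) n (n + 1)
  let homologyIso : ((_root_.Ext k C n).obj (Opposite.op X)).obj Y ≅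
      S.moduleCatLeftHomologyData.H :=
    P.isoExt n Y ≪≫ ShortComplex.homologyMapIso (K.isoSc' _ n (n + 1) rfl (by simp)) ≪≫
      S.moduleCatHomologyIso
  let cyclesToExt : LinearMap.ker S.g.hom →+ Abelian.Ext.{w} X Y n :=
    .mk' (fun f => P.extMk (f.1 : P.complex.X n ⟶ Y) (n + 1) rfl f.2) fun _ _ =>
      (P.add_extMk _ _ _ _ _ _).symm
  have hker : cyclesToExt.ker = (LinearMap.range S.moduleCatToCycles).toAddSubgroup := by
    ext f
    refine (extMk_eq_zero_iff_exists_prev P (f.1 : P.complex.X n ⟶ Y) f.2).trans ⟨?_, ?_⟩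
    · rintro ⟨g, hg⟩
      exact ⟨g, Subtype.ext hg⟩
    · rintro ⟨g, hg⟩
      exact ⟨g, congrArg Subtype.val hg⟩
  let homologyToExt : S.moduleCatLeftHomologyData.H →+ Abelian.Ext.{w} X Y n :=
    QuotientAddGroup.lift _ cyclesToExt hker.ge
  have hinj : Function.Injective homologyToExt :=
    (QuotientAddGroup.injective_lift_iff _ _ hker.ge).2 hker.symm
  exact ⟨homologyToExt.comp homologyIso.hom.hom.toAddMonoidHom,
    hinj.comp homologyIso.toLinearEquiv.injective⟩

end DerivedExt

section Rep

universe u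

variable {k G : Type u} [CommRing k] [CommMonoid G]
  (l : Type*) [Ring l] [Linear l (Rep.{u} k G)]

theorem exists_injective_repExt_to_ext (A B : Rep.{u} k G) (n : ℕ) :
    ∃ φ : ((Ext l (Rep k G) n).obj (Opposite.op A)).obj B →+
      Abelian.Ext (Rep.toModuleMonoidAlgebra.obj A) (Rep.toModuleMonoidAlgebra.obj B) n,
      Function.Injective φ := by
  have : HasExt.{u} (Rep.{u} k G) := hasExt_of_enoughProjectives _
  let F := Rep.toModuleMonoidAlgebra.{u} (k := k) (G := G)
  have : F.Additive := ⟨rfl⟩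
  obtain ⟨φ, hφ⟩ := exists_injective_derivedExt_to_ext l A B n
  exact ⟨(F.mapExtAddHom A B n).comp φ,
    (F.mapExt_bijective_of_preservesProjectiveObjects A B n).1.comp hφ⟩

theorem HasInfiniteCommonQuotient.exists_rep {A B : Rep.{u} k G}
    (h : HasInfiniteCommonQuotient (MonoidAlgebra k G) (Rep.toModuleMonoidAlgebra.obj A)
      (Rep.toModuleMonoidAlgebra.obj B)) :
    ∃ (C : Rep.{u} k G) (f : A ⟶ C) (g : B ⟶ C),
      Function.Surjective f.hom ∧ Function.Surjective g.hom ∧ Infinite C := by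
  obtain ⟨P, Q, ⟨e⟩, hinf⟩ := h
  refine ⟨Rep.ofModuleMonoidAlgebra.obj (ModuleCat.of _ (_ ⧸ P)),
    (Rep.unitIso A).hom ≫ Rep.ofModuleMonoidAlgebra.map (ModuleCat.ofHom P.mkQ),
    (Rep.unitIso B).hom ≫
      Rep.ofModuleMonoidAlgebra.map (ModuleCat.ofHom (e.symm.toLinearMap ∘ₗ Q.mkQ)),
    P.mkQ_surjective, e.symm.surjective.comp Q.mkQ_surjective, hinf⟩

theorem propositionA_general [IsNoetherianRing k] [Monoid.FG G] {ω : Set ℕ} {A B : Rep.{u} k G}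
    (hA : FiniteRankAbelian A) (hB : IsCernikovOmega ω B)
    (hquot : ¬ ∃ (C : Rep.{u} k G) (f : A ⟶ C) (g : B ⟶ C),
      Function.Surjective f.hom ∧ Function.Surjective g.hom ∧ Infinite C) (n : ℕ) :
    IsCernikovOmega ω (((Ext l (Rep k G) n).obj (Opposite.op A)).obj B) := by
  have : IsNoetherianRing (MonoidAlgebra k G) := Algebra.FiniteType.isNoetherianRing k _
  obtain ⟨N, hN, hNω, hBN⟩ := isCernikovOmega_iff.1 hB
  obtain ⟨φ, hφ⟩ := exists_injective_repExt_to_ext l A B n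
  have hExt := FiniteRankAbelian.isArtinianPowTorsion_ext hN
    (A := Rep.toModuleMonoidAlgebra.obj A) (B := Rep.toModuleMonoidAlgebra.obj B) hA hBN
    (fun h => hquot h.exists_rep) n
  exact isCernikovOmega_iff.2 ⟨N, hN, hNω, hExt.of_injective φ hφ⟩

end Rep

/-- **Proposition A.**  Let `G` be a finitely generated abelian group and `ω` a
set of primes.  Let `A` be a `ℤG`-module whose underlying abelian group has
finite rank, and let `B` be a `ℤG`-module whose underlying additive group is a
Černikov `ω`-group.  If `A` has no infinite `ℤG`-module quotient that is
isomorphic as a `ℤG`-module to a quotient of `B`, then `Ext^n_{ℤG}(A, B)` is a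
Černikov `ω`-group for all `n ≥ 0`. -/
theorem propositionA (G : Type) [CommGroup G] (hfg : Group.FG G) (ω : Set ℕ)
    (A B : Rep ℤ G) (hA : FiniteRankAbelian A) (hB : IsCernikovOmega ω B)
    (hquot : ¬ ∃ (C : Rep ℤ G) (f : A ⟶ C) (g : B ⟶ C),
      Function.Surjective f.hom ∧ Function.Surjective g.hom ∧
        Infinite (C : Type)) (n : ℕ) :
    IsCernikovOmega ω (((Ext ℤ (Rep ℤ G) n).obj (Opposite.op A)).obj B) :=
  have := Group.fg_iff_monoid_fg.1 hfg
  propositionA_general ℤ hA hB hquot n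

end
end

section
/- Let R be a principal ideal domain such that the quotient ring R/Ra is finite for every nonzero element a of R, and let G be an abelian group. Let A and B be RG-modules that, as R-modules, are torsion-free of finite R-rank, and suppose that A contains no nontrivial RG-submodule isomorphic as an RG-module to an RG-submodule of B. Then Ext^n_{RG}(A,B) and Tor_n^{RG}(A,B) are bounded R-modules for all n ≥ 0. -/
/-!
Statement 6: Proposition 2.1 (Kropholler–Lorensen–Robinson) on `Ext` and `Tor`
over the group ring `RG` of an abelian group `G` over a principal ideal domain
`R` with finite quotients.  `RG`-modules are objects of
`ModuleCat (MonoidAlgebra R G)`, and `Ext` and `Tor` are taken in this category.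
-/

open CategoryTheory

noncomputable section

/-- An `RG`-module (for `S = RG` an `R`-algebra) is torsion-free as an
`R`-module. -/
def RTorsionFree (R S : Type*) [CommRing R] [Ring S] [Algebra R S]
    (A : Type*) [AddCommGroup A] [Module S A] : Prop :=
  ∀ (r : R) (a : A), r ≠ 0 → a ≠ 0 → algebraMap R S r • a ≠ 0

/-- An `RG`-module (for `S = RG` an `R`-algebra) has finite `R`-rank: finite
torsion-free rank, and finite `p`-rank for every prime `p` of `R`. -/
def FiniteRankOver (R S : Type*) [CommRing R] [Ring S] [Algebra R S]
    (A : Type*) [AddCommGroup A] [Module S A] : Prop :=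
  (∃ n : ℕ, ∀ k : ℕ,
      (∃ f : (Fin k →₀ R) →+ A, Function.Injective f ∧
        ∀ (r : R) (v : Fin k →₀ R), f (r • v) = algebraMap R S r • f v) → k ≤ n) ∧
  ∀ p : R, Prime p → ∃ n : ℕ, ∀ k : ℕ,
      (∃ f : (Fin k →₀ R) →+ A,
        (∀ (r : R) (v : Fin k →₀ R), f (r • v) = algebraMap R S r • f v) ∧
        (∀ v, algebraMap R S p • f v = 0) ∧
        ∀ v, f v = 0 → ∃ w, v = p • w) → k ≤ n

/-- An `R`-bounded module: some nonzero `r ∈ R` annihilates it. -/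
def RBounded (R S : Type*) [CommRing R] [Ring S] [Algebra R S]
    (A : Type*) [AddCommGroup A] [Module S A] : Prop :=
  ∃ r : R, r ≠ 0 ∧ ∀ a : A, algebraMap R S r • a = 0

/-!
A scalar killing `A` or `B` kills `Ext^n(A, B)` and `Tor_n(A, B)`, so it is enough that
`Ann A + Ann B` contains some nonzero `r ∈ R`.  Otherwise some prime `P` of `RG` contains
`Ann A + Ann B` and meets `R` in zero.  Then `P` is the exact annihilator of an element of `A`, and
likewise of an element of `B`, so `RG ⧸ P` embeds in both modules.

To find the element of `A`, choose `W ⊆ A` of minimal rank with `Ann W ⊆ P`; by minimality every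
nonzero `L ⊆ W` still has `Ann L ⊆ P`.  If `L` is rationally irreducible, then every `s ∉ Ann L` is
invertible modulo `Ann L` up to a nonzero scalar of `R`, which forces `Ann L = P`.
-/

open Limits
open Module (IsTorsionFree)
open Submodule hiding mem_annihilator
open scoped Cardinal nonZeroDivisors

universe u v u₁ v₁

/-! ### Ranks of submodules over a domain -/

section Rank

variable {R : Type*} [CommRing R] [IsDomain R] {M M' : Type u} [AddCommGroup M] [Module R M]
  [AddCommGroup M'] [Module R M']

theorem exists_smul_mem_of_rank_le {N L : Submodule R M} (hNL : N ≤ L)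
    (hL : Module.rank R L < ℵ₀) (hrank : Module.rank R L ≤ Module.rank R N) {x : M} (hx : x ∈ L) :
    ∃ c : R, c ≠ 0 ∧ c • x ∈ N := by
  have hN : Module.rank R (N.submoduleOf L) = Module.rank R L :=
    (submoduleOfEquivOfLe hNL).rank_eq.trans (hrank.antisymm' (Submodule.rank_mono hNL))
  have hquot : Module.rank R (L ⧸ N.submoduleOf L) = 0 :=
    Cardinal.eq_of_add_eq_add_right (by rw [rank_quotient_add_rank, hN, zero_add]) (hN ▸ hL)
  obtain ⟨c, hc, hcx⟩ := rank_eq_zero_iff.1 hquot (Submodule.Quotient.mk ⟨x, hx⟩)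
  rw [← Submodule.Quotient.mk_smul, Submodule.Quotient.mk_eq_zero] at hcx
  exact ⟨c, hc, hcx⟩

theorem rank_map_lt_of_apply_eq_zero [IsTorsionFree R M] (f : M →ₗ[R] M') {W : Submodule R M}
    (hW : Module.rank R W < ℵ₀) {x : M} (hx : x ∈ W) (hx0 : x ≠ 0) (hfx : f x = 0) :
    Module.rank R (W.map f) < Module.rank R W := by
  have hsum := (f.domRestrict W).rank_range_add_rank_ker
  rw [LinearMap.range_domRestrict] at hsum
  refine (rank_map_le f W).lt_of_ne fun heq => ?_
  rw [← heq] at hsum hW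
  have hker : (f.domRestrict W).ker = ⊥ :=
    Submodule.rank_eq_zero.1 (Cardinal.eq_of_add_eq_add_left (hsum.trans (add_zero _).symm) hW)
  exact hx0 (congrArg Subtype.val (LinearMap.ker_eq_bot'.1 hker ⟨x, hx⟩ hfx))

end Rank

/-! ### Rationally irreducible submodules -/

/-- A nonzero `S`-submodule `L` is rationally irreducible over `R` if `L / N` is `R`-torsion for
every nonzero `S`-submodule `N` of `L`.  When `R` is a domain and `L` is torsion-free, this says
that `F ⊗ L` is a simple `F ⊗ S`-module, `F` being the field of fractions of `R`; it is phrased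
without localizing. -/
def IsRationallyIrreducible (R : Type*) {S M : Type*} [Semiring R] [Semiring S] [AddCommMonoid M]
    [Module R M] [Module S M] (L : Submodule S M) : Prop :=
  L ≠ ⊥ ∧ ∀ N ≤ L, N ≠ ⊥ → ∀ x ∈ L, ∃ c : R, c ≠ 0 ∧ c • x ∈ N

section RationallyIrreducible

variable {R S : Type*} [CommRing R] [IsDomain R] [CommRing S] [Algebra R S]
  {M : Type*} [AddCommGroup M] [Module R M] [Module S M] [IsScalarTower R S M]

namespace IsRationallyIrreducible

variable [IsTorsionFree R M] {L : Submodule S M}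

theorem torsionOf_eq_annihilator (hL : IsRationallyIrreducible R L) {x : M} (hx : x ∈ L)
    (hx0 : x ≠ 0) : Ideal.torsionOf S M x = L.annihilator := by
  refine le_antisymm (fun s hs => Submodule.mem_annihilator.2 fun y hy => ?_)
    fun s hs => Submodule.mem_annihilator.1 hs x hx
  obtain ⟨c, hc, hcy⟩ :=
    hL.2 (S ∙ x) ((span_singleton_le_iff_mem x L).2 hx) (by simpa using hx0) y hy
  obtain ⟨t, ht⟩ := mem_span_singleton.1 hcy
  refine (smul_eq_zero_iff_right hc).1 ?_
  rw [smul_comm, ← ht, smul_comm, (Ideal.mem_torsionOf_iff x s).1 hs, smul_zero]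

theorem exists_algebraMap_sub_mul_mem_annihilator (hL : IsRationallyIrreducible R L) {s : S}
    (hs : s ∉ L.annihilator) :
    ∃ c : R, c ≠ 0 ∧ ∃ t : S, algebraMap R S c - t * s ∈ L.annihilator := by
  obtain ⟨x, hx, hsx⟩ : ∃ x ∈ L, s • x ≠ 0 := by
    simpa [Submodule.mem_annihilator] using hs
  have hx0 : x ≠ 0 := fun h => hsx (by rw [h, smul_zero])
  obtain ⟨c, hc, hcx⟩ := hL.2 (S ∙ s • x) ((span_singleton_le_iff_mem _ L).2 (L.smul_mem s hx))
    (by simpa using hsx) x hx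
  obtain ⟨t, ht⟩ := mem_span_singleton.1 hcx
  refine ⟨c, hc, t, ?_⟩
  rw [← hL.torsionOf_eq_annihilator hx hx0, Ideal.mem_torsionOf_iff, sub_smul, algebraMap_smul,
    ← ht, mul_smul, sub_self]

theorem annihilator_eq (hL : IsRationallyIrreducible R L) {P : Ideal S} (hLP : L.annihilator ≤ P)
    (hP : ∀ c : R, algebraMap R S c ∈ P → c = 0) : L.annihilator = P := by
  refine hLP.antisymm fun p hp => ?_
  by_contra hpL
  obtain ⟨c, hc, t, ht⟩ := hL.exists_algebraMap_sub_mul_mem_annihilator hpL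
  exact hc (hP c ((Submodule.sub_mem_iff_left P (P.mul_mem_left t hp)).1 (hLP ht)))

end IsRationallyIrreducible

theorem exists_le_isRationallyIrreducible (hM : Module.rank R M < ℵ₀) {W : Submodule S M}
    (hW : W ≠ ⊥) : ∃ L ≤ W, IsRationallyIrreducible R L := by
  obtain ⟨L, ⟨hLW, hL⟩, hmin⟩ := exists_minimalFor_of_wellFoundedLT
    (fun L : Submodule S M => L ≤ W ∧ L ≠ ⊥) (fun L => Module.rank R L) ⟨W, le_rfl, hW⟩
  refine ⟨L, hLW, hL, fun N hNL hN x hx => ?_⟩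
  have hNL' : N.restrictScalars R ≤ L.restrictScalars R := hNL
  exact exists_smul_mem_of_rank_le hNL' ((Submodule.rank_le _).trans_lt hM)
    (hmin ⟨hNL.trans hLW, hN⟩ (Submodule.rank_mono hNL')) hx

/-! ### Primes containing the annihilator -/

theorem annihilator_map_lsmul_le {P : Ideal S} [hP : P.IsPrime] {W : Submodule S M}
    (hW : W.annihilator ≤ P) {q : S} (hq : q ∉ P) :
    (W.map (LinearMap.lsmul S M q)).annihilator ≤ P := by
  intro s hs
  have hsq : s * q ∈ W.annihilator := Submodule.mem_annihilator.2 fun y hy => by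
    rw [mul_smul]
    exact Submodule.mem_annihilator.1 hs _ (mem_map_of_mem hy)
  exact (hP.mem_or_mem (hW hsq)).resolve_right hq

variable [IsTorsionFree R M]

theorem exists_forall_le_annihilator_le (hM : Module.rank R M < ℵ₀) {P : Ideal S}
    [hPprime : P.IsPrime] (hP : Module.annihilator S M ≤ P) :
    ∃ W : Submodule S M, W ≠ ⊥ ∧ ∀ L ≤ W, L ≠ ⊥ → L.annihilator ≤ P := by
  obtain ⟨W, hWP, hmin⟩ := exists_minimalFor_of_wellFoundedLT
    (fun W : Submodule S M => W.annihilator ≤ P) (fun W => Module.rank R W)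
    ⟨⊤, by rwa [annihilator_top]⟩
  refine ⟨W, ?_, fun L hLW hL q hq => ?_⟩
  · rintro rfl
    exact hPprime.ne_top (top_le_iff.1 (annihilator_bot (R := S) (M := M) ▸ hWP))
  · by_contra hqP
    obtain ⟨x, hx, hx0⟩ := L.exists_mem_ne_zero_of_ne_bot hL
    have hlt := rank_map_lt_of_apply_eq_zero ((LinearMap.lsmul S M q).restrictScalars R)
      (W := W.restrictScalars R) ((Submodule.rank_le _).trans_lt hM) (hLW hx) hx0
      (Submodule.mem_annihilator.1 hq x hx)
    exact (hmin (annihilator_map_lsmul_le hWP hqP) hlt.le).not_gt hlt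

theorem exists_torsionOf_eq_of_annihilator_le (hM : Module.rank R M < ℵ₀) {P : Ideal S}
    [P.IsPrime] (hMP : Module.annihilator S M ≤ P) (hP : ∀ c : R, algebraMap R S c ∈ P → c = 0) :
    ∃ x : M, Ideal.torsionOf S M x = P := by
  obtain ⟨W, hW, hWP⟩ := exists_forall_le_annihilator_le hM hMP
  obtain ⟨L, hLW, hL⟩ := exists_le_isRationallyIrreducible hM hW
  obtain ⟨x, hx, hx0⟩ := L.exists_mem_ne_zero_of_ne_bot hL.1
  exact ⟨x, (hL.torsionOf_eq_annihilator hx hx0).trans (hL.annihilator_eq (hWP L hLW hL.1) hP)⟩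

theorem exists_algebraMap_mem_annihilator_sup_annihilator {N : Type*} [AddCommGroup N] [Module R N]
    [Module S N] [IsScalarTower R S N] [IsTorsionFree R N]
    (hM : Module.rank R M < ℵ₀) (hN : Module.rank R N < ℵ₀)
    (hsub : ¬ ∃ (P : Submodule S M) (Q : Submodule S N), P ≠ ⊥ ∧ Nonempty (P ≃ₗ[S] Q)) :
    ∃ r : R, r ≠ 0 ∧ algebraMap R S r ∈ Module.annihilator S M ⊔ Module.annihilator S N := by
  contrapose! hsub
  have hdisj : Disjoint ((Module.annihilator S M ⊔ Module.annihilator S N : Ideal S) : Set S)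
      (Algebra.algebraMapSubmonoid S R⁰) := by
    rw [Set.disjoint_right]
    rintro _ ⟨r, hr, rfl⟩
    exact hsub r (nonZeroDivisors.ne_zero hr)
  obtain ⟨P, hPprime, hle, hPdisj⟩ := Ideal.exists_le_prime_disjoint _ _ hdisj
  have hP (c : R) (hc : algebraMap R S c ∈ P) : c = 0 := by
    by_contra hc0
    exact hPdisj.notMem_of_mem_left hc ⟨c, mem_nonZeroDivisors_of_ne_zero hc0, rfl⟩
  obtain ⟨x, hx⟩ := exists_torsionOf_eq_of_annihilator_le hM (le_sup_left.trans hle) hP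
  obtain ⟨y, hy⟩ := exists_torsionOf_eq_of_annihilator_le hN (le_sup_right.trans hle) hP
  have hx0 : x ≠ 0 := by
    rintro rfl
    exact hPprime.ne_top (hx ▸ Ideal.torsionOf_zero S M)
  exact ⟨S ∙ x, S ∙ y, mt span_singleton_eq_bot.1 hx0,
    ⟨(Ideal.quotTorsionOfEquivSpanSingleton S M x).symm ≪≫ₗ
      quotEquivOfEq _ _ (hx.trans hy.symm) ≪≫ₗ Ideal.quotTorsionOfEquivSpanSingleton S N y⟩⟩

end RationallyIrreducible

/-! ### Scalars annihilating derived functors -/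

section Linear

variable {k : Type*} [Semiring k] {C : Type u} [Category.{v} C] [Preadditive C] [Linear k C]

/-- The opposite of a `k`-linear category, with the same scalar multiplication on morphisms; it
allows `Ext`, a left derived functor into `(ModuleCat k)ᵒᵖ`, to be treated like `Tor`. -/
instance oppositeLinear : Linear k Cᵒᵖ where
  homModule X Y := (opEquiv X Y).module k
  smul_comp _ _ _ r f g := congrArg Quiver.Hom.op (Linear.comp_smul _ _ _ g.unop r f.unop)
  comp_smul _ _ _ f r g := congrArg Quiver.Hom.op (Linear.smul_comp _ _ _ r g.unop f.unop)

instance rightOp_linear {D : Type u₁} [Category.{v₁} D] [Preadditive D] [Linear k D]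
    (F : Cᵒᵖ ⥤ D) [F.Linear k] : F.rightOp.Linear k where
  map_smul f s := congrArg Quiver.Hom.op (F.map_smul s f.op)

instance linearYoneda_obj_linear {k : Type*} [CommRing k] [Linear k C] (Y : C) :
    ((linearYoneda k C).obj Y).Linear k where
  map_smul f s := by
    ext g
    exact Linear.smul_comp _ _ _ s f.unop g

theorem smul_hom_eq_zero {X Y : C} {s : k} (h : s • 𝟙 Y = 0) (f : X ⟶ Y) : s • f = 0 := by
  rw [← Category.comp_id f, ← Linear.comp_smul, h, comp_zero]

theorem smul_id_eq_zero_of_iso {X Y : C} (e : X ≅ Y) {s : k} (h : s • 𝟙 Y = 0) :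
    s • 𝟙 X = 0 := by
  rw [← e.hom_inv_id, ← Linear.smul_comp, smul_hom_eq_zero h, zero_comp]

theorem smul_id_homology_eq_zero {ι : Type*} {c : ComplexShape ι} {K : HomologicalComplex C c}
    {s : k} (h : Homotopy (s • 𝟙 K) 0) (i : ι) [K.HasHomology i] : s • 𝟙 (K.homology i) = 0 := by
  rw [← HomologicalComplex.homologyMap_id]
  refine (ShortComplex.homologyMap_smul _ s).symm.trans ?_
  exact (h.homologyMap_eq i).trans (HomologicalComplex.homologyMap_zero ..)

end Linear

section LeftDerived

variable {k : Type*} [Semiring k] {C : Type u} [Category.{v} C] [Abelian C]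
  {D : Type u₁} [Category.{v₁} D] [Abelian D] [Linear k D]

theorem nonempty_homotopy_smul_id_zero [Linear k C] {X : C} (P : ProjectiveResolution X) {s : k}
    (h : s • 𝟙 X = 0) : Nonempty (Homotopy (s • 𝟙 P.complex) 0) := by
  refine ⟨ProjectiveResolution.liftHomotopyZero (P := P) (Q := P) _ ?_⟩
  rw [Linear.smul_comp, Category.id_comp]
  exact HomologicalComplex.to_single_hom_ext (smul_hom_eq_zero h (P.π.f 0))

variable [HasProjectiveResolutions C] (F : C ⥤ D) [F.Additive]

theorem smul_id_leftDerived_obj_eq_zero [Linear k C] [F.Linear k] {X : C} {s : k}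
    (h : s • 𝟙 X = 0) (n : ℕ) : s • 𝟙 ((F.leftDerived n).obj X) = 0 := by
  let P := projectiveResolution X
  obtain ⟨H⟩ := nonempty_homotopy_smul_id_zero P h
  have hsource : s • 𝟙 _ = (F.mapHomologicalComplex _).map (s • 𝟙 P.complex) := by ext; simp
  have htarget : (F.mapHomologicalComplex _).map (0 : P.complex ⟶ P.complex) = 0 := by simp
  exact smul_id_eq_zero_of_iso (P.isoLeftDerivedObj F n) (smul_id_homology_eq_zero
    (((Homotopy.ofEq hsource).trans (F.mapHomotopy H)).trans (.ofEq htarget)) n)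

theorem smul_id_leftDerived_obj_eq_zero_of_forall {s : k} (h : ∀ X, s • 𝟙 (F.obj X) = 0) (n : ℕ)
    (X : C) : s • 𝟙 ((F.leftDerived n).obj X) = 0 := by
  let P := projectiveResolution X
  refine smul_id_eq_zero_of_iso (P.isoLeftDerivedObj F n) (smul_id_homology_eq_zero (.ofEq ?_) n)
  ext i
  exact h (P.complex.X i)

end LeftDerived

section Tor

open MonoidalCategory

variable {k : Type*} [Semiring k] {C : Type u} [Category.{v} C] [Abelian C] [Linear k C]
  [HasProjectiveResolutions C] [MonoidalCategory C] [MonoidalPreadditive C] [MonoidalLinear k C]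

theorem smul_id_tor_eq_zero_of_left {X : C} {s : k} (h : s • 𝟙 X = 0) (n : ℕ) (Y : C) :
    s • 𝟙 (((Tor C n).obj X).obj Y) = 0 := by
  refine smul_id_leftDerived_obj_eq_zero_of_forall ((tensoringLeft C).obj X) (fun Z => ?_) n Y
  change s • 𝟙 (X ⊗ Z) = 0
  rw [← id_whiskerRight, ← MonoidalLinear.smul_whiskerRight, h,
    MonoidalPreadditive.zero_whiskerRight]

theorem smul_id_tor_eq_zero_of_right (X : C) {Y : C} {s : k} (h : s • 𝟙 Y = 0) (n : ℕ) :
    s • 𝟙 (((Tor C n).obj X).obj Y) = 0 :=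
  have : ((tensoringLeft C).obj X).Linear k := inferInstanceAs ((tensorLeft X).Linear k)
  smul_id_leftDerived_obj_eq_zero ((tensoringLeft C).obj X) h n

end Tor

section Ext

variable {k : Type*} [CommRing k] {C : Type u} [Category.{v} C] [Abelian C] [Linear k C]
  [EnoughProjectives C]

theorem smul_id_ext_eq_zero_of_left {X : C} {s : k} (h : s • 𝟙 X = 0) (n : ℕ) (Y : C) :
    s • 𝟙 (((Ext k C n).obj (.op X)).obj Y) = 0 :=
  Quiver.Hom.op_inj (smul_id_leftDerived_obj_eq_zero ((linearYoneda k C).obj Y).rightOp h n)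

theorem smul_id_ext_eq_zero_of_right (X : C) {Y : C} {s : k} (h : s • 𝟙 Y = 0) (n : ℕ) :
    s • 𝟙 (((Ext k C n).obj (.op X)).obj Y) = 0 := by
  have hHom (Z : C) : s • 𝟙 (((linearYoneda k C).obj Y).obj (.op Z)) = 0 := by
    ext f
    exact smul_hom_eq_zero h f
  exact Quiver.Hom.op_inj (smul_id_leftDerived_obj_eq_zero_of_forall (s := s)
    ((linearYoneda k C).obj Y).rightOp (fun Z => congrArg Quiver.Hom.op (hHom Z)) n X)

end Ext

section ModuleCat

variable {S : Type u} [CommRing S]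

theorem smul_id_eq_zero_iff_mem_annihilator {X : ModuleCat.{v} S} {s : S} :
    s • 𝟙 X = 0 ↔ s ∈ Module.annihilator S X :=
  ⟨fun h => Module.mem_annihilator.2 fun x => congrArg (fun f => f.hom x) h,
    fun h => by ext x; exact Module.mem_annihilator.1 h x⟩

variable (A B : ModuleCat.{u} S) (n : ℕ)

theorem annihilator_sup_annihilator_le_annihilator_ext :
    Module.annihilator S A ⊔ Module.annihilator S B ≤
      Module.annihilator S (((Ext S (ModuleCat S) n).obj (.op A)).obj B) := by
  refine sup_le (fun s h => ?_) fun s h => ?_ <;>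
    rw [← smul_id_eq_zero_iff_mem_annihilator] at h ⊢
  · exact smul_id_ext_eq_zero_of_left h n B
  · exact smul_id_ext_eq_zero_of_right A h n

theorem annihilator_sup_annihilator_le_annihilator_tor :
    Module.annihilator S A ⊔ Module.annihilator S B ≤
      Module.annihilator S (((Tor (ModuleCat S) n).obj A).obj B) := by
  refine sup_le (fun s h => ?_) fun s h => ?_ <;>
    rw [← smul_id_eq_zero_iff_mem_annihilator] at h ⊢
  · exact smul_id_tor_eq_zero_of_left h n B
  · exact smul_id_tor_eq_zero_of_right A h n

end ModuleCat

/-! ### Boundedness of `Ext` and `Tor` -/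

section Bounded

variable {R : Type*} [CommRing R]

theorem RTorsionFree.isTorsionFree [IsDomain R] {S A : Type*} [Ring S] [Algebra R S]
    [AddCommGroup A] [Module S A] (hA : RTorsionFree R S A) :
    letI := Module.compHom A (algebraMap R S)
    IsTorsionFree R A :=
  letI := Module.compHom A (algebraMap R S)
  .of_smul_eq_zero fun r a h => by
    by_contra! hra
    exact hA r a hra.1 hra.2 h

theorem FiniteRankOver.rank_lt_aleph0 {S A : Type*} [Ring S] [Algebra R S]
    [AddCommGroup A] [Module S A] (hA : FiniteRankOver R S A) :
    letI := Module.compHom A (algebraMap R S)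
    Module.rank R A < ℵ₀ := by
  let : Module R A := Module.compHom A (algebraMap R S)
  obtain ⟨n, hn⟩ := hA.1
  have hle : Module.rank R A ≤ n := rank_le fun s hs => by
    let f := Finsupp.linearCombination R fun i => (s.equivFin.symm i : A)
    exact hn s.card ⟨f.toAddMonoidHom, hs.comp _ s.equivFin.symm.injective, f.map_smul⟩
  exact hle.trans_lt Cardinal.natCast_lt_aleph0

theorem ext_tor_bounded_over_abelian_group_ring_general [IsDomain R] {S : Type u} [CommRing S]
    [Algebra R S] (A B : ModuleCat.{u} S) (hAtf : RTorsionFree R S A) (hBtf : RTorsionFree R S B)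
    (hArk : letI := Module.compHom A (algebraMap R S); Module.rank R A < ℵ₀)
    (hBrk : letI := Module.compHom B (algebraMap R S); Module.rank R B < ℵ₀)
    (hsub : ¬ ∃ (P : Submodule S A) (Q : Submodule S B), P ≠ ⊥ ∧ Nonempty (P ≃ₗ[S] Q)) :
    ∃ r : R, r ≠ 0 ∧ ∀ n : ℕ,
      (∀ e : ((Ext S (ModuleCat S) n).obj (.op A)).obj B, algebraMap R S r • e = 0) ∧
      ∀ t : ((Tor (ModuleCat S) n).obj A).obj B, algebraMap R S r • t = 0 := by
  let (X : ModuleCat.{u} S) : Module R X := Module.compHom X (algebraMap R S)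
  have (X : ModuleCat.{u} S) : IsScalarTower R S X := .of_algebraMap_smul fun _ _ => rfl
  have := hAtf.isTorsionFree
  have := hBtf.isTorsionFree
  obtain ⟨r, hr, hmem⟩ := exists_algebraMap_mem_annihilator_sup_annihilator hArk hBrk hsub
  exact ⟨r, hr, fun n =>
    ⟨Module.mem_annihilator.1 (annihilator_sup_annihilator_le_annihilator_ext A B n hmem),
      Module.mem_annihilator.1 (annihilator_sup_annihilator_le_annihilator_tor A B n hmem)⟩⟩

end Bounded

/-- **Proposition 2.1.**  Let `R` be a principal ideal domain such that `R/Ra` is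
finite for every nonzero `a : R`, and let `G` be an abelian group.  Let `A` and
`B` be `RG`-modules that are `R`-torsion-free of finite `R`-rank, and suppose
`A` contains no nontrivial `RG`-submodule isomorphic to an `RG`-submodule of
`B`.  Then `Ext^n_{RG}(A, B)` and `Tor_n^{RG}(A, B)` are bounded `R`-modules for
all `n ≥ 0`. -/
theorem ext_tor_bounded_over_abelian_group_ring
    (R : Type) [CommRing R] [IsDomain R] [IsPrincipalIdealRing R]
    (hRfin : ∀ a : R, a ≠ 0 → Finite (R ⧸ Ideal.span ({a} : Set R)))
    (G : Type) [CommGroup G]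
    (A B : ModuleCat (MonoidAlgebra R G))
    (hAtf : RTorsionFree R (MonoidAlgebra R G) A)
    (hBtf : RTorsionFree R (MonoidAlgebra R G) B)
    (hAfr : FiniteRankOver R (MonoidAlgebra R G) A)
    (hBfr : FiniteRankOver R (MonoidAlgebra R G) B)
    (hsub : ¬ ∃ (P : Submodule (MonoidAlgebra R G) A)
        (Q : Submodule (MonoidAlgebra R G) B),
        P ≠ ⊥ ∧ Nonempty (P ≃ₗ[MonoidAlgebra R G] Q))
    (n : ℕ) :
    RBounded R (MonoidAlgebra R G)
      (((Ext (MonoidAlgebra R G) (ModuleCat (MonoidAlgebra R G)) n).obj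
        (Opposite.op A)).obj B) ∧
    RBounded R (MonoidAlgebra R G)
      (((Tor (ModuleCat (MonoidAlgebra R G)) n).obj A).obj B) := by
  obtain ⟨r, hr, hkill⟩ := ext_tor_bounded_over_abelian_group_ring_general A B hAtf hBtf
    hAfr.rank_lt_aleph0 hBfr.rank_lt_aleph0 hsub
  exact ⟨⟨r, hr, (hkill n).1⟩, ⟨r, hr, (hkill n).2⟩⟩

end
end

section
/- Let π be a set of primes and G an abelian group. Let B be a ℤG-module whose underlying additive group is torsion-free of finite rank, and suppose that B has no nontrivial ℤG-submodule whose underlying abelian group is π-spectral. If A is a ℤG-module belonging to the class 𝔠(G,π) and B̄ is any ℤG-module quotient of B, then Ext^n_{ℤG}(A,B̄) and Tor_n^{ℤG}(A,B̄) are bounded ℤ-modules for all n ≥ 0. -/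
/-!
Statement 10: Lemma 3.3 of the paper.  Ext^n_{ℤG}(A, B̄) is the Ext group in
the abelian category Rep ℤ G of ℤG-modules, and Tor_n^{ℤG}(A, B̄) is the Tor
object in the category of modules over the (commutative) group ring ℤG,
computed after transporting along the equivalence Rep ℤ G ≌ ModuleCat ℤG.
-/

open CategoryTheory

noncomputable section




/-- Mathlib's former `AddMonoid.IsTorsionFree`: no nonzero element has finite
additive order. -/
def AddMonoid.IsTorsionFree (G : Type*) [AddMonoid G] : Prop :=
  ∀ g : G, g ≠ 0 → ¬IsOfFinAddOrder g

/-- A `ℤG`-module (given as an object of `Rep ℤ G`) whose underlying abelian group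
is torsion-free, of finite rank, and `π`-spectral. -/
def NiceRep {G : Type} [Group G] (π : Set ℕ) (M : Rep.{0} ℤ G) : Prop :=
  AddMonoid.IsTorsionFree M ∧ FiniteRankAbelian M ∧ addSpectrum M ⊆ π

/-- The class `𝒰` of solvable groups of finite rank. -/
def MemClassU (G : Type) [Group G] : Prop :=
  SolvableOfFiniteRank G ∧
  ∃ (N : Subgroup G) (_ : N.Normal),
    Group.IsNilpotent N ∧
    Group.FG (G ⧸ N) ∧ VirtuallyAbelian (G ⧸ N) ∧
    ∃ (r : ℕ) (T : Fin (r + 1) → Subgroup G),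
      Monotone T ∧ T 0 = ⊥ ∧
      ((T (Fin.last r) : Set G) = {g : G | g ∈ N ∧ IsOfFinOrder g}) ∧
      (∀ (i : Fin (r + 1)) (g t : G), t ∈ T i → g * t * g⁻¹ ∈ T i) ∧
      (∀ (i : Fin r) (n t : G), n ∈ N → t ∈ T i.succ →
        n * t * n⁻¹ * t⁻¹ ∈ T i.castSucc) ∧
      (∀ i : Fin r, (T i.castSucc).relIndex (T i.succ) = 0 →
        ∃ M : Rep.{0} ℤ (G ⧸ N), NiceRep (groupSpectrum G) M ∧
          ∃ φ : M → G,
            (∀ m : M, φ m ∈ T i.succ) ∧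
            (∀ m m' : M, (φ (m + m'))⁻¹ * (φ m * φ m') ∈ T i.castSucc) ∧
            (∀ t : G, t ∈ T i.succ → ∃ m : M, (φ m)⁻¹ * t ∈ T i.castSucc) ∧
            (∀ (g : G) (m : M),
              (φ (M.ρ (QuotientGroup.mk g) m))⁻¹ * (g * φ m * g⁻¹) ∈ T i.castSucc))

/-- The class `𝔠(G, π)`: the smallest class of `ℤG`-modules containing every
finite `ℤG`-module and every `ℤG`-module whose underlying abelian group is
torsion-free of finite rank and `π`-spectral, and closed under forming
`ℤG`-module quotients and extensions. -/
inductive MemC (G : Type) [Group G] (π : Set ℕ) : Rep ℤ G → Prop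
  | of_finite (A : Rep ℤ G) (h : Finite (A : Type)) : MemC G π A
  | of_nice (A : Rep ℤ G) (h : NiceRep π A) : MemC G π A
  | quot (A B : Rep ℤ G) (f : A ⟶ B) (hf : Function.Surjective f.hom)
      (hA : MemC G π A) : MemC G π B
  | ext (A B C : Rep ℤ G) (f : A ⟶ B) (g : B ⟶ C)
      (hinj : Function.Injective f.hom) (hsurj : Function.Surjective g.hom)
      (hexact : ∀ b : (B : Type), g.hom b = 0 ↔ ∃ a : (A : Type), f.hom a = b)
      (hA : MemC G π A) (hC : MemC G π C) : MemC G π B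


/-- The image of a representation of `G` in the category of modules over the
group ring `ℤG`. -/
def toMod {G : Type} [Group G] (A : Rep.{0} ℤ G) : ModuleCat.{0} (MonoidAlgebra ℤ G) :=
  (Rep.equivalenceModuleMonoidAlgebra.functor).obj A

/-- A bounded `ℤ`-module: some nonzero integer annihilates it. -/
def ZBounded (A : Type*) [AddCommGroup A] : Prop :=
  ∃ m : ℤ, m ≠ 0 ∧ ∀ a : A, m • a = 0

/-!
Call two ideals generically coprime if their sum contains a nonzero integer. The annihilators of `A`
and `B` in `ℤG` have this property. If `A` is torsion-free of finite rank and `π`-spectral, then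
`ℚ ⊗ A` and `ℚ ⊗ B` have finite length over `ℚ ⊗ ℤG`, so a maximal ideal containing both of their
annihilators would be the annihilator of an element of each. Clearing denominators, `A` and `B`
would have isomorphic nonzero cyclic submodules, but the one in `B` cannot be `π`-spectral. The
property is clear for finite `A`, passes to quotients because annihilators grow, and passes to
extensions because the product of the annihilators of the two ends kills the middle.

So some nonzero integer is `m = r + s` with `r` killing `A` and `s` killing `B̄`. Since `ℤG` is
commutative, `r` and `s` act on `Ext^n(A, B̄)` and `Tor_n(A, B̄)` through either variable, hence by
zero, and therefore `m` acts by zero.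
-/

/-- Two ideals of a `D`-algebra are generically coprime if their sum contains the image of a nonzero
element of `D`, that is, if they become comaximal over the fraction field of the domain `D`. -/
def IsGenericallyCoprime (D : Type*) {R : Type*} [CommRing D] [CommRing R] [Algebra D R]
    (I J : Ideal R) : Prop :=
  ∃ d : D, d ≠ 0 ∧ algebraMap D R d ∈ I ⊔ J

namespace IsGenericallyCoprime

variable {D R : Type*} [CommRing D] [CommRing R] [Algebra D R] {I I' J J' : Ideal R}

theorem mono (h : IsGenericallyCoprime D I J) (hI : I ≤ I') (hJ : J ≤ J') :
    IsGenericallyCoprime D I' J' :=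
  let ⟨d, hd, hmem⟩ := h
  ⟨d, hd, sup_le_sup hI hJ hmem⟩

theorem symm (h : IsGenericallyCoprime D I J) : IsGenericallyCoprime D J I :=
  let ⟨d, hd, hmem⟩ := h
  ⟨d, hd, sup_comm I J ▸ hmem⟩

theorem of_algebraMap_mem_left {d : D} (hd : d ≠ 0) (hmem : algebraMap D R d ∈ I) :
    IsGenericallyCoprime D I J :=
  ⟨d, hd, Ideal.mem_sup_left hmem⟩

theorem mul_left [NoZeroDivisors D] (h : IsGenericallyCoprime D I J)
    (h' : IsGenericallyCoprime D I' J) : IsGenericallyCoprime D (I * I') J := by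
  obtain ⟨d, hd, hmem⟩ := h
  obtain ⟨d', hd', hmem'⟩ := h'
  refine ⟨d * d', mul_ne_zero hd hd', ?_⟩
  have hle : (I ⊔ J) * (I' ⊔ J) ≤ I * I' ⊔ J := by
    rw [Ideal.sup_mul, Ideal.mul_sup]
    exact sup_le (sup_le_sup le_rfl Ideal.mul_le_right) (le_sup_of_le_right Ideal.mul_le_left)
  rw [map_mul]
  exact hle (Ideal.mul_mem_mul hmem hmem')

end IsGenericallyCoprime

section FiniteLength

variable {S V : Type*} [CommRing S] [AddCommGroup V] [Module S V]

theorem exists_notMem_forall_mul_mem_annihilator_of_isMaximal [IsArtinian S V] [IsNoetherian S V]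
    (P : Ideal S) [hP : P.IsMaximal] :
    ∃ n : ℕ, ∃ s ∉ P, ∀ t ∈ P ^ n, s * t ∈ Module.annihilator S V := by
  obtain ⟨n, hn⟩ := IsArtinian.monotone_stabilizes
    ⟨fun n => OrderDual.toDual (P ^ n • (⊤ : Submodule S V)),
      fun _ _ h => Submodule.smul_mono_left (Ideal.pow_le_pow_right h)⟩
  have hstable : P ^ n • (⊤ : Submodule S V) ≤ P • P ^ n • (⊤ : Submodule S V) := by
    rw [← Submodule.mul_smul, ← pow_succ']
    exact (OrderDual.toDual.injective (hn (n + 1) n.le_succ)).le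
  obtain ⟨s, hs, hs0⟩ := Submodule.exists_sub_one_mem_and_smul_eq_zero_of_fg_of_le_smul P _
    (IsNoetherian.noetherian _) hstable
  refine ⟨n, s, fun hsP => hP.ne_top ?_, fun t ht => Module.mem_annihilator.2 fun v => ?_⟩
  · rw [Ideal.eq_top_iff_one]
    simpa using P.sub_mem hsP hs
  · rw [mul_smul]
    exact hs0 _ (Submodule.smul_mem_smul ht trivial)

theorem exists_torsionOf_eq_of_annihilator_le_s10 [IsArtinian S V] [IsNoetherian S V]
    (P : Ideal S) [hP : P.IsMaximal] (h : Module.annihilator S V ≤ P) :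
    ∃ v : V, Ideal.torsionOf S V v = P := by
  classical
  have hex := exists_notMem_forall_mul_mem_annihilator_of_isMaximal (V := V) P
  obtain ⟨s, hsP, hs⟩ := Nat.find_spec hex
  obtain ⟨n, hn⟩ : ∃ n, Nat.find hex = n + 1 := Nat.exists_eq_succ_of_ne_zero fun h0 =>
    hsP (h (by simpa using hs 1 (by simp [h0])))
  obtain ⟨t, ht, hst⟩ : ∃ t ∈ P ^ n, s * t ∉ Module.annihilator S V := by
    by_contra! hcon
    exact Nat.find_min hex (by omega) ⟨s, hsP, hcon⟩
  obtain ⟨v, hv⟩ : ∃ v : V, (s * t) • v ≠ 0 := by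
    simpa only [Module.mem_annihilator, not_forall] using hst
  refine ⟨(s * t) • v, (hP.eq_of_le ?_ fun p hp => ?_).symm⟩
  · rwa [Ne, Ideal.torsionOf_eq_top_iff]
  · rw [Ideal.mem_torsionOf_iff, smul_smul, mul_left_comm]
    exact Module.mem_annihilator.1
      (hs _ (by rw [hn, pow_succ']; exact Ideal.mul_mem_mul hp ht)) v

end FiniteLength

section BaseChange

open TensorProduct

section Action

variable (D K R A : Type*) [CommRing D] [CommRing K] [Algebra D K]
  [CommRing R] [Algebra D R] [AddCommGroup A] [Module D A] [Module R A] [IsScalarTower D R A]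

/-- The action of `K ⊗ R` on `K ⊗ A` extending that of `R` on `A`, as a homomorphism into the
endomorphism algebra. -/
def baseChangeAction : K ⊗[D] R →ₐ[K] Module.End K (K ⊗[D] A) :=
  Algebra.TensorProduct.lift (Algebra.ofId K _)
    (((Module.End.baseChangeHom D K A).restrictScalars D).comp (Algebra.lsmul D D A))
    fun x _ => Algebra.commutes x _

/-- The `K ⊗ R`-module structure on `K ⊗ A`. It is only used as a local instance because for `A = R`
it competes with the multiplication of the ring `K ⊗ R`. -/
@[reducible]
def baseChangeModule : Module (K ⊗[D] R) (K ⊗[D] A) :=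
  Module.compHom _ (baseChangeAction D K R A).toRingHom

end Action

attribute [local instance] baseChangeModule

section SMul

variable {D K R A : Type*} [CommRing D] [CommRing K] [Algebra D K]
  [CommRing R] [Algebra D R] [AddCommGroup A] [Module D A] [Module R A] [IsScalarTower D R A]

instance baseChangeModule_isScalarTower : IsScalarTower K (K ⊗[D] R) (K ⊗[D] A) where
  smul_assoc x s v := by
    change baseChangeAction D K R A (x • s) v = x • baseChangeAction D K R A s v
    rw [map_smul, LinearMap.smul_apply]

theorem one_tmul_smul_one_tmul (r : R) (a : A) :
    ((1 : K) ⊗ₜ[D] r) • ((1 : K) ⊗ₜ[D] a) = 1 ⊗ₜ (r • a) := by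
  have h := Algebra.TensorProduct.lift_tmul (Algebra.ofId K (Module.End K (K ⊗[D] A)))
    (((Module.End.baseChangeHom D K A).restrictScalars D).comp (Algebra.lsmul D D A))
    (fun x _ => Algebra.commutes x _) 1 r
  refine (LinearMap.congr_fun h _).trans ?_
  rw [map_one, one_mul]
  exact LinearMap.baseChange_tmul ..

end SMul

section FractionField

variable {D R A : Type*} (K : Type*) [CommRing D] [IsDomain D] [Field K] [Algebra D K]
  [IsFractionRing D K] [CommRing R] [Algebra D R] [AddCommGroup A] [Module D A] [Module R A]
  [IsScalarTower D R A]

theorem exists_smul_eq_one_tmul (v : K ⊗[D] A) :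
    ∃ d : D, d ≠ 0 ∧ ∃ a : A, d • v = 1 ⊗ₜ a := by
  obtain ⟨⟨a, d⟩, h⟩ :=
    IsLocalizedModule.surj (nonZeroDivisors D) (TensorProduct.mk D K A 1) v
  exact ⟨d, nonZeroDivisors.ne_zero d.2, a, h⟩

theorem one_tmul_eq_zero_iff [Module.IsTorsionFree D A] {a : A} :
    (1 : K) ⊗ₜ[D] a = 0 ↔ a = 0 := by
  refine ⟨fun h => ?_, fun h => by rw [h, tmul_zero]⟩
  obtain ⟨d, hd⟩ :=
    (IsLocalizedModule.eq_zero_iff (nonZeroDivisors D) (TensorProduct.mk D K A 1)).1 h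
  exact (smul_eq_zero_iff_right (nonZeroDivisors.ne_zero d.2)).1 hd

theorem mem_annihilator_of_one_tmul_mem [Module.IsTorsionFree D A] {r : R}
    (h : (1 : K) ⊗ₜ[D] r ∈ Module.annihilator (K ⊗[D] R) (K ⊗[D] A)) :
    r ∈ Module.annihilator R A :=
  Module.mem_annihilator.2 fun a => (one_tmul_eq_zero_iff K (D := D)).1 <| by
    rw [← one_tmul_smul_one_tmul, Module.mem_annihilator.1 h]

theorem exists_torsionOf_eq_comap_includeRight [Module.IsTorsionFree D A]
    [Module.Finite K (K ⊗[D] A)] (P : Ideal (K ⊗[D] R)) [P.IsMaximal]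
    (h : Module.annihilator (K ⊗[D] R) (K ⊗[D] A) ≤ P) :
    ∃ a : A, Ideal.torsionOf R A a =
      P.comap (Algebra.TensorProduct.includeRight : R →ₐ[D] K ⊗[D] R) := by
  have : IsArtinian (K ⊗[D] R) (K ⊗[D] A) := isArtinian_of_tower K inferInstance
  have : IsNoetherian (K ⊗[D] R) (K ⊗[D] A) := isNoetherian_of_tower K inferInstance
  have : Module.IsTorsionFree D (K ⊗[D] A) := .trans_faithfulSMul D K _
  obtain ⟨v, hv⟩ := exists_torsionOf_eq_of_annihilator_le_s10 P h
  obtain ⟨d, hd, a, hda⟩ := exists_smul_eq_one_tmul K v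
  refine ⟨a, Ideal.ext fun r => ?_⟩
  calc r • a = 0
      ↔ ((1 : K) ⊗ₜ[D] r) • ((1 : K) ⊗ₜ[D] a) = 0 := by
        rw [one_tmul_smul_one_tmul, one_tmul_eq_zero_iff]
    _ ↔ d • ((1 : K) ⊗ₜ[D] r) • v = 0 := by
        rw [← hda, ← algebraMap_smul K d v, ← algebraMap_smul K d (_ • v), smul_comm]
    _ ↔ ((1 : K) ⊗ₜ[D] r) • v = 0 := smul_eq_zero_iff_right hd
    _ ↔ (1 : K) ⊗ₜ[D] r ∈ P := by rw [← hv, Ideal.mem_torsionOf_iff]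

variable {B : Type*} [AddCommGroup B] [Module D B] [Module R B] [IsScalarTower D R B]

theorem isGenericallyCoprime_annihilator_of_isCoprime [Module.IsTorsionFree D A]
    [Module.IsTorsionFree D B]
    (h : IsCoprime (Module.annihilator (K ⊗[D] R) (K ⊗[D] A))
      (Module.annihilator (K ⊗[D] R) (K ⊗[D] B))) :
    IsGenericallyCoprime D (Module.annihilator R A) (Module.annihilator R B) := by
  obtain ⟨s, hs, t, ht, hst⟩ := Ideal.isCoprime_iff_exists.1 h
  obtain ⟨d, hd, r, hdr⟩ := exists_smul_eq_one_tmul K s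
  have hdt : d • t = 1 ⊗ₜ (algebraMap D R d - r) := by
    rw [tmul_sub, ← hdr, eq_sub_iff_add_eq', ← smul_add, hst, Algebra.algebraMap_eq_smul_one,
      tmul_smul, Algebra.TensorProduct.one_def]
  have hr : r ∈ Module.annihilator R A :=
    mem_annihilator_of_one_tmul_mem K (hdr ▸ Submodule.smul_of_tower_mem _ d hs)
  have hr' : algebraMap D R d - r ∈ Module.annihilator R B :=
    mem_annihilator_of_one_tmul_mem K (hdt ▸ Submodule.smul_of_tower_mem _ d ht)
  exact ⟨d, hd, Submodule.mem_sup.2 ⟨r, hr, _, hr', add_sub_cancel _ _⟩⟩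

theorem isGenericallyCoprime_annihilator_or_exists_torsionOf_eq
    [Module.IsTorsionFree D A] [Module.IsTorsionFree D B]
    [Module.Finite K (K ⊗[D] A)] [Module.Finite K (K ⊗[D] B)] :
    IsGenericallyCoprime D (Module.annihilator R A) (Module.annihilator R B) ∨
      ∃ (a : A) (b : B), b ≠ 0 ∧ Ideal.torsionOf R A a = Ideal.torsionOf R B b := by
  by_cases hcop : IsCoprime (Module.annihilator (K ⊗[D] R) (K ⊗[D] A))
      (Module.annihilator (K ⊗[D] R) (K ⊗[D] B))
  · exact .inl (isGenericallyCoprime_annihilator_of_isCoprime K hcop)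
  · rw [Ideal.isCoprime_iff_sup_eq] at hcop
    obtain ⟨P, hP, hle⟩ := Ideal.exists_le_maximal _ hcop
    obtain ⟨a, ha⟩ := exists_torsionOf_eq_comap_includeRight K P (le_sup_left.trans hle)
    obtain ⟨b, hb⟩ := exists_torsionOf_eq_comap_includeRight K P (le_sup_right.trans hle)
    refine .inr ⟨a, b, ?_, ha.trans hb.symm⟩
    rw [Ne, ← Ideal.torsionOf_eq_top_iff (R := R), hb]
    exact Ideal.comap_ne_top _ hP.ne_top

end FractionField

end BaseChange

theorem annihilator_mul_annihilator_le_of_exact {R A B C : Type*} [CommRing R]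
    [AddCommGroup A] [AddCommGroup B] [AddCommGroup C] [Module R A] [Module R B] [Module R C]
    {f : A →ₗ[R] B} {g : B →ₗ[R] C} (h : Function.Exact f g) :
    Module.annihilator R A * Module.annihilator R C ≤ Module.annihilator R B := by
  refine Ideal.mul_le.2 fun r hr s hs => Module.mem_annihilator.2 fun b => ?_
  obtain ⟨a, ha⟩ := (h (s • b)).1 (by rw [map_smul, Module.mem_annihilator.1 hs])
  rw [mul_smul, ← ha, ← map_smul, Module.mem_annihilator.1 hr, map_zero]

theorem moduleIsTorsionFree_int_of_isTorsionFree {A : Type*} [AddCommGroup A]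
    (h : AddMonoid.IsTorsionFree A) : Module.IsTorsionFree ℤ A :=
  .of_smul_eq_zero fun m a hma => by
    by_contra! hne
    exact h a hne.2 (isOfFinAddOrder_iff_zsmul_eq_zero.2 ⟨m, hne.1, hma⟩)

open TensorProduct in
theorem FiniteRankAbelian.finite_rat_tensorProduct {A : Type*} [AddCommGroup A]
    (h : FiniteRankAbelian A) : Module.Finite ℚ (ℚ ⊗[ℤ] A) := by
  obtain ⟨n, hn⟩ := h.1
  have hrank : Module.rank ℤ A ≤ n := rank_le fun s hs => hn _
    ⟨(Finsupp.linearCombination ℤ fun i => (s.equivFin.symm i : A)).toAddMonoidHom,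
      hs.comp _ s.equivFin.symm.injective⟩
  have hbase : Module.rank ℚ (ℚ ⊗[ℤ] A) = Module.rank ℤ A :=
    (TensorProduct.isBaseChange ℤ A ℚ).rank_eq
  rw [← Module.rank_lt_aleph0_iff, hbase]
  exact hrank.trans_lt Cardinal.natCast_lt_aleph0

theorem groupSpectrum_subset_of_injective {G H : Type*} [Group G] [Group H] (f : G →* H)
    (hf : Function.Injective f) : groupSpectrum G ⊆ groupSpectrum H := by
  rintro p ⟨hp, S, K, hK, ⟨e⟩⟩
  let φ : S ≃* S.map f := S.equivMapOfInjective f hf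
  have hK' : (K.map φ.toMonoidHom).Normal := hK.map _ φ.surjective
  exact ⟨hp, S.map f, K.map φ.toMonoidHom, hK',
    ⟨(QuotientGroup.congr K (K.map φ.toMonoidHom) φ rfl).symm.trans e⟩⟩

theorem addSpectrum_span_singleton_subset {R A B : Type*} [Ring R] [AddCommGroup A]
    [AddCommGroup B] [Module R A] [Module R B] {a : A} {b : B}
    (h : Ideal.torsionOf R A a = Ideal.torsionOf R B b) :
    addSpectrum (Submodule.span R {b}) ⊆ addSpectrum A := by
  let e : Submodule.span R {b} ≃ₗ[R] Submodule.span R {a} :=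
    (Ideal.quotTorsionOfEquivSpanSingleton R B b).symm.trans <|
      (Submodule.quotEquivOfEq _ _ h.symm).trans (Ideal.quotTorsionOfEquivSpanSingleton R A a)
  let f : Submodule.span R {b} →ₗ[R] A := (Submodule.span R {a}).subtype ∘ₗ e.toLinearMap
  exact groupSpectrum_subset_of_injective (AddMonoidHom.toMultiplicative f.toAddMonoidHom)
    (Subtype.val_injective.comp e.injective)

theorem isGenericallyCoprime_annihilator_of_addSpectrum_subset {R A B : Type*} [CommRing R]
    [AddCommGroup A] [Module R A] [AddCommGroup B] [Module R B] {π : Set ℕ}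
    (htA : AddMonoid.IsTorsionFree A) (hfA : FiniteRankAbelian A) (hA : addSpectrum A ⊆ π)
    (htB : AddMonoid.IsTorsionFree B) (hfB : FiniteRankAbelian B)
    (hB : ∀ S : Submodule R B, S ≠ ⊥ → ¬ addSpectrum S ⊆ π) :
    IsGenericallyCoprime ℤ (Module.annihilator R A) (Module.annihilator R B) := by
  have := moduleIsTorsionFree_int_of_isTorsionFree htA
  have := moduleIsTorsionFree_int_of_isTorsionFree htB
  have := hfA.finite_rat_tensorProduct
  have := hfB.finite_rat_tensorProduct
  refine (isGenericallyCoprime_annihilator_or_exists_torsionOf_eq ℚ).resolve_right ?_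
  rintro ⟨a, b, hb, hab⟩
  exact hB _ (Submodule.span_singleton_eq_bot.not.2 hb)
    ((addSpectrum_span_singleton_subset hab).trans hA)

section Derived

open Limits

variable {C D : Type*} [Category C] [Abelian C] [HasProjectiveResolutions C]
  [Category D] [Abelian D] (F : C ⥤ D) [F.Additive]

instance leftDerived_additive (n : ℕ) : (F.leftDerived n).Additive where
  map_add {X Y f g} := by
    let P := projectiveResolution X
    let Q := projectiveResolution Y
    have hf := ProjectiveResolution.lift_commutes f P Q
    have hg := ProjectiveResolution.lift_commutes g P Q
    rw [F.leftDerived_map_eq n f _ hf, F.leftDerived_map_eq n g _ hg,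
      F.leftDerived_map_eq n (f + g) (P := P) (Q := Q)
        (ProjectiveResolution.lift f P Q + ProjectiveResolution.lift g P Q)
        (by rw [Preadditive.add_comp, hf, hg, Functor.map_add, Preadditive.comp_add]),
      Functor.map_add, Preadditive.add_comp, Preadditive.comp_add]

theorem leftDerived_map_catCenter_app_eq_zero (z : CatCenter C) (hz : ∀ X, F.map (z.app X) = 0)
    (n : ℕ) (X : C) : (F.leftDerived n).map (z.app X) = 0 := by
  let P := projectiveResolution X
  let zP : P.complex ⟶ P.complex :=
    { f := fun i => z.app (P.complex.X i)
      comm' := fun i j _ => (z.naturality (P.complex.d i j)).symm }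
  have hzP : zP ≫ P.π = P.π ≫ (ChainComplex.single₀ C).map (z.app X) := by
    ext
    simpa [zP] using (z.naturality (P.π.f 0)).symm
  have hF : (F.mapHomologicalComplex (ComplexShape.down ℕ)).map zP = 0 := by
    ext i
    exact hz _
  rw [F.leftDerived_map_eq n _ zP hzP, Functor.comp_map, hF, Functor.map_zero, zero_comp,
    comp_zero]

theorem zsmul_id_leftDerived_obj_eq_zero (z : CatCenter C) (hz : ∀ X, F.map (z.app X) = 0)
    {X : C} {m : ℤ} (hX : z.app X = m • 𝟙 X) (n : ℕ) :
    m • 𝟙 ((F.leftDerived n).obj X) = 0 := by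
  rw [← (F.leftDerived n).map_id, ← Functor.map_zsmul, ← hX,
    leftDerived_map_catCenter_app_eq_zero F z hz]

theorem zsmul_ext_eq_zero {k : Type*} [Ring k] {C : Type*} [Category C] [Abelian C]
    [Linear k C] [EnoughProjectives C] (z : CatCenter C) {X Y : C} {m : ℤ}
    (hX : z.app X = m • 𝟙 X) (hY : z.app Y = 0) (n : ℕ)
    (x : ((Ext k C n).obj (Opposite.op X)).obj Y) : m • x = 0 := by
  have hz (W : C) : ((linearYoneda k C).obj Y).rightOp.map (z.app W) = 0 := by
    refine Quiver.Hom.unop_inj (ModuleCat.hom_ext (LinearMap.ext fun (f : W ⟶ Y) => ?_))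
    change z.app W ≫ f = 0
    rw [← z.naturality f, hY, comp_zero]
  have h := zsmul_id_leftDerived_obj_eq_zero _ z hz hX n
  exact ConcreteCategory.congr_hom (congrArg Quiver.Hom.unop h) x

theorem zsmul_id_tor_eq_zero {R : Type*} [Ring R] {C : Type*} [Category C] [MonoidalCategory C]
    [Abelian C] [Linear R C] [MonoidalPreadditive C] [MonoidalLinear R C]
    [HasProjectiveResolutions C] {X Y : C} {r : R} {m : ℤ} (hX : r • 𝟙 X = 0)
    (hY : r • 𝟙 Y = m • 𝟙 Y) (n : ℕ) : m • 𝟙 (((Tor C n).obj X).obj Y) = 0 := by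
  refine zsmul_id_leftDerived_obj_eq_zero _ (Linear.toCatCenter R C r) (fun W => ?_) hY n
  calc MonoidalCategory.whiskerLeft X (r • 𝟙 W)
    _ = MonoidalCategory.whiskerRight (r • 𝟙 X) W := by
      rw [MonoidalLinear.whiskerLeft_smul, MonoidalCategory.whiskerLeft_id,
        MonoidalLinear.smul_whiskerRight, MonoidalCategory.id_whiskerRight]
    _ = 0 := by rw [hX, MonoidalPreadditive.zero_whiskerRight]

/-- The element of the center of `C` obtained from one of the center of `D` by transport along a
fully faithful functor `C ⥤ D`. -/
def catCenterPreimage {C D : Type*} [Category C] [Category D] (F : C ⥤ D) [F.Full] [F.Faithful]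
    (z : CatCenter D) : CatCenter C where
  app X := F.preimage (z.app (F.obj X))
  naturality X Y f := F.map_injective <| by
    simpa only [Functor.id_obj, Functor.id_map, Functor.map_comp, Functor.map_preimage]
      using z.naturality (F.map f)

end Derived

section ModuleCat

variable {R : Type*} [CommRing R]

theorem smul_id_eq_zero_of_mem_annihilator {X : ModuleCat R} {r : R}
    (h : r ∈ Module.annihilator R X) : r • 𝟙 X = 0 :=
  ModuleCat.hom_ext (LinearMap.ext (Module.mem_annihilator.1 h))

theorem IsGenericallyCoprime.exists_smul_id_eq_zero {X Y : ModuleCat R}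
    (h : IsGenericallyCoprime ℤ (Module.annihilator R X) (Module.annihilator R Y)) :
    ∃ m : ℤ, m ≠ 0 ∧ ∃ r : R, r • 𝟙 X = 0 ∧ r • 𝟙 Y = m • 𝟙 Y := by
  obtain ⟨m, hm, hmem⟩ := h
  obtain ⟨r, hr, s, hs, hrs⟩ := Submodule.mem_sup.1 hmem
  refine ⟨m, hm, r, smul_id_eq_zero_of_mem_annihilator hr, ?_⟩
  rw [eq_sub_of_add_eq hrs, sub_smul, smul_id_eq_zero_of_mem_annihilator hs, sub_zero,
    algebraMap_int_eq, eq_intCast, Int.cast_smul_eq_zsmul]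

theorem zBounded_tor_of_isGenericallyCoprime {R : Type} [CommRing R] {X Y : ModuleCat.{0} R}
    (h : IsGenericallyCoprime ℤ (Module.annihilator R X) (Module.annihilator R Y)) (n : ℕ) :
    ZBounded (((Tor (ModuleCat R) n).obj X).obj Y) := by
  obtain ⟨m, hm, r, hX, hY⟩ := h.exists_smul_id_eq_zero
  exact ⟨m, hm, fun x => ConcreteCategory.congr_hom (zsmul_id_tor_eq_zero hX hY n) x⟩

end ModuleCat

section Rep

instance equivalenceModuleMonoidAlgebra_functor_additive {k G : Type*} [CommRing k] [Monoid G] :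
    (Rep.equivalenceModuleMonoidAlgebra (k := k) (G := G)).functor.Additive where
  map_add := rfl

section Group

variable {G : Type} [Group G]

theorem annihilator_toMod_le_of_surjective {A B : Rep.{0} ℤ G} (f : A ⟶ B)
    (hf : Function.Surjective f.hom) :
    Module.annihilator (MonoidAlgebra ℤ G) (toMod A) ≤
      Module.annihilator (MonoidAlgebra ℤ G) (toMod B) :=
  LinearMap.annihilator_le_of_surjective (Rep.toModuleMonoidAlgebraMap f).hom hf

theorem asModuleEquiv_symm_apply_mem {k G : Type*} [CommRing k] [Monoid G] {V : Rep k G}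
    (S : Submodule (MonoidAlgebra k G) (Rep.toModuleMonoidAlgebra.obj V)) (g : G) {x : V}
    (hx : V.ρ.asModuleEquiv.symm x ∈ S) : V.ρ.asModuleEquiv.symm (V.ρ g x) ∈ S := by
  rw [V.ρ.asModuleEquiv_symm_map_rho]
  exact S.smul_mem _ hx

theorem not_addSpectrum_submodule_toMod_subset {π : Set ℕ} {B : Rep.{0} ℤ G}
    (hsub : ∀ S : AddSubgroup (B : Type), (∀ (g : G), ∀ b ∈ S, B.ρ g b ∈ S) →
      S ≠ ⊥ → ¬ (addSpectrum S ⊆ π)) (S : Submodule (MonoidAlgebra ℤ G) (toMod B)) (hS : S ≠ ⊥) :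
    ¬ addSpectrum S ⊆ π := by
  refine hsub S.toAddSubgroup (fun g b hb => ?_) fun h => hS ?_
  · exact asModuleEquiv_symm_apply_mem S g hb
  · exact Submodule.toAddSubgroup_injective h

end Group

variable {G : Type} [CommGroup G]

theorem zBounded_ext_of_isGenericallyCoprime {A Y : Rep.{0} ℤ G}
    (h : IsGenericallyCoprime ℤ (Module.annihilator (MonoidAlgebra ℤ G) (toMod A))
      (Module.annihilator (MonoidAlgebra ℤ G) (toMod Y))) (n : ℕ) :
    ZBounded (((Ext ℤ (Rep ℤ G) n).obj (Opposite.op A)).obj Y) := by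
  obtain ⟨m, hm, r, hY, hA⟩ := h.symm.exists_smul_id_eq_zero
  let F := (Rep.equivalenceModuleMonoidAlgebra (k := ℤ) (G := G)).functor
  refine ⟨m, hm, zsmul_ext_eq_zero (catCenterPreimage F (Linear.toCatCenter _ _ r)) ?_ ?_ n⟩ <;>
    refine F.map_injective ((F.map_preimage _).trans ?_)
  · rw [Functor.map_zsmul, F.map_id]
    exact hA
  · rw [Functor.map_zero]
    exact hY

theorem MemC.isGenericallyCoprime_annihilator {π : Set ℕ} {B : Rep.{0} ℤ G}
    (htf : AddMonoid.IsTorsionFree (B : Type)) (hfr : FiniteRankAbelian (B : Type))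
    (hsub : ∀ S : AddSubgroup (B : Type), (∀ (g : G), ∀ b ∈ S, B.ρ g b ∈ S) →
      S ≠ ⊥ → ¬ (addSpectrum S ⊆ π)) {A : Rep.{0} ℤ G} (hA : MemC G π A) :
    IsGenericallyCoprime ℤ (Module.annihilator (MonoidAlgebra ℤ G) (toMod A))
      (Module.annihilator (MonoidAlgebra ℤ G) (toMod B)) := by
  induction hA with
  | of_finite A _ =>
    refine .of_algebraMap_mem_left (d := Nat.card A) (mod_cast Nat.card_pos.ne') ?_
    refine Module.mem_annihilator.2 fun (a : toMod A) => ?_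
    rw [algebraMap_smul, natCast_zsmul]
    exact card_nsmul_eq_zero' (G := A)
  | of_nice A h =>
    exact isGenericallyCoprime_annihilator_of_addSpectrum_subset (A := toMod A) h.1 h.2.1 h.2.2
      htf hfr (not_addSpectrum_submodule_toMod_subset hsub)
  | quot A C f hf _ ih => exact ih.mono (annihilator_toMod_le_of_surjective f hf) le_rfl
  | ext A C D f g _ _ hexact _ _ ihA ihD =>
    exact (ihA.mul_left ihD).mono (annihilator_mul_annihilator_le_of_exact
      (f := (Rep.toModuleMonoidAlgebraMap f).hom) (g := (Rep.toModuleMonoidAlgebraMap g).hom)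
      hexact) le_rfl

end Rep

/-- Let `π` be a set of primes and `G` an abelian group.  Let `B` be a
`ℤG`-module whose underlying additive group is torsion-free of finite rank,
with no nontrivial `ℤG`-submodule whose underlying abelian group is
`π`-spectral.  If `A` is a `ℤG`-module belonging to `𝔠(G, π)` and `B̄` is a
`ℤG`-module quotient of `B` (realized by a surjection `q : B ⟶ Bbar`), then
`Ext^n_{ℤG}(A, B̄)` and `Tor_n^{ℤG}(A, B̄)` are bounded `ℤ`-modules for all
`n ≥ 0`. -/
theorem ext_tor_bounded_of_memC (G : Type) [CommGroup G] (π : Set ℕ)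
    (B : Rep ℤ G) (htf : AddMonoid.IsTorsionFree (B : Type))
    (hfr : FiniteRankAbelian (B : Type))
    (hsub : ∀ S : AddSubgroup (B : Type), (∀ (g : G), ∀ b ∈ S, B.ρ g b ∈ S) →
      S ≠ ⊥ → ¬ (addSpectrum S ⊆ π))
    (A : Rep ℤ G) (hA : MemC G π A)
    (Bbar : Rep ℤ G) (q : B ⟶ Bbar) (hq : Function.Surjective q.hom) (n : ℕ) :
    ZBounded (((Ext ℤ (Rep ℤ G) n).obj (Opposite.op A)).obj Bbar) ∧
    ZBounded (((Tor (ModuleCat (MonoidAlgebra ℤ G)) n).obj (toMod A)).obj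
      (toMod Bbar)) := by
  have hcop : IsGenericallyCoprime ℤ (Module.annihilator (MonoidAlgebra ℤ G) (toMod A))
      (Module.annihilator (MonoidAlgebra ℤ G) (toMod Bbar)) :=
    (hA.isGenericallyCoprime_annihilator htf hfr hsub).mono le_rfl
      (annihilator_toMod_le_of_surjective q hq)
  exact ⟨zBounded_ext_of_isGenericallyCoprime hcop n, zBounded_tor_of_isGenericallyCoprime hcop n⟩

end
end
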